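/- Let D be a non-dictatorial, unidimensional domain that admits no invariant, tops-only and strategy-proof rule f : D^2 → A, and let D be an (a,b)-semi-hybrid domain on a tree T. Then every tops-only and strategy-proof rule f : D^2 → A is a hybrid rule, namely an (â,b̂)-hybrid rule on some tree T̂ whose free zone ⟨â, b̂|T̂⟩ contains ⟨a, b|T⟩; in particular, every tops-only and strategy-proof rule f : D^2 → A behaves like a dictatorship on the free zone ⟨a, b|T⟩. -/

import Mathlib

open Classical

set_option linter.unusedSectionVars false
set_option linter.unusedVariables false

/-- A strict preference over `A`, represented as a ranking bijection:
`P k` is the `(k+1)`-th ranked alternative. -/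
abbrev Pref (A : Type*) [Fintype A] := Fin (Fintype.card A) ≃ A

variable {A : Type*} [Fintype A] [DecidableEq A] [Nonempty A]

/-- `rk P k` : the `(k+1)`-th ranked alternative of `P` (0-indexed, so `rk P 0 = r₁(P)`). -/
noncomputable def rk (P : Pref A) (k : ℕ) : A :=
  if h : k < Fintype.card A then P ⟨k, h⟩ else Classical.arbitrary A

/-- The peak `r₁(P)`. -/
noncomputable def peak (P : Pref A) : A := rk P 0

/-- The second-ranked alternative `r₂(P)`. -/
noncomputable def second (P : Pref A) : A := rk P 1

/-- `a` is strictly preferred to `b` under `P`. -/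
def prefers (P : Pref A) (a b : A) : Prop := P.symm a < P.symm b

/-- Two preferences are completely reversed. -/
def Reversed (P P' : Pref A) : Prop := ∀ a b : A, prefers P a b ↔ prefers P' b a

/-- A profile lies in the domain `D`. -/
def InDom (D : Set (Pref A)) {n : ℕ} (P : Fin n → Pref A) : Prop := ∀ i, P i ∈ D

/-- Unanimity (an SCF satisfying it is called a rule). -/
def IsRule (D : Set (Pref A)) {n : ℕ} (f : (Fin n → Pref A) → A) : Prop :=
  ∀ P : Fin n → Pref A, InDom D P → ∀ a : A, (∀ i, peak (P i) = a) → f P = a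

/-- Strategy-proofness (relative to the domain `D`). -/
def StrategyProof (D : Set (Pref A)) {n : ℕ} (f : (Fin n → Pref A) → A) : Prop :=
  ∀ P : Fin n → Pref A, InDom D P → ∀ i : Fin n, ∀ Q ∈ D,
    f P = f (Function.update P i Q) ∨ prefers (P i) (f P) (f (Function.update P i Q))

/-- The tops-only property. -/
def TopsOnly (D : Set (Pref A)) {n : ℕ} (f : (Fin n → Pref A) → A) : Prop :=
  ∀ P P' : Fin n → Pref A, InDom D P → InDom D P' →
    (∀ i, peak (P i) = peak (P' i)) → f P = f P'

/-- Anonymity. -/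
def Anonymous (D : Set (Pref A)) {n : ℕ} (f : (Fin n → Pref A) → A) : Prop :=
  ∀ P : Fin n → Pref A, InDom D P → ∀ σ : Equiv.Perm (Fin n), f (P ∘ σ) = f P

/-- `f` behaves like a dictatorship on `B`. -/
def DictatorOn (D : Set (Pref A)) {n : ℕ} (f : (Fin n → Pref A) → A) (B : Set A) : Prop :=
  ∃ i : Fin n, ∀ P : Fin n → Pref A, InDom D P → (∀ j, peak (P j) ∈ B) → f P = peak (P i)

/-- `f` is a dictatorship. -/
def Dictatorship (D : Set (Pref A)) {n : ℕ} (f : (Fin n → Pref A) → A) : Prop :=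
  DictatorOn D f Set.univ

/-- A dictatorial domain. -/
def DictatorialDomain (D : Set (Pref A)) : Prop :=
  ∀ n : ℕ, 2 ≤ n → ∀ f : (Fin n → Pref A) → A,
    IsRule D f → StrategyProof D f → Dictatorship D f

/-- A tops-only domain. -/
def TopsOnlyDomain (D : Set (Pref A)) : Prop :=
  ∀ n : ℕ, 2 ≤ n → ∀ f : (Fin n → Pref A) → A,
    IsRule D f → StrategyProof D f → TopsOnly D f

/-- Adjacency of two alternatives relative to the domain `D`. -/
def DomAdjacent (D : Set (Pref A)) (a b : A) : Prop :=
  ∃ P ∈ D, ∃ P' ∈ D, peak P = a ∧ second P = b ∧ peak P' = b ∧ second P' = a ∧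
    ∀ k : ℕ, 2 ≤ k → rk P k = rk P' k

/-- The adjacency graph `G_∼` of the domain `D`. -/
noncomputable def adjGraph (D : Set (Pref A)) : SimpleGraph A :=
  SimpleGraph.fromRel (DomAdjacent D)

/-- Path-connectedness of the domain. -/
def PathConnectedDom (D : Set (Pref A)) : Prop := (adjGraph D).Connected

/-- Diversity: the domain contains two completely reversed preferences. -/
def Diversity (D : Set (Pref A)) : Prop := ∃ P ∈ D, ∃ P' ∈ D, Reversed P P'

/-- `S(D^a)`: the set of alternatives second-ranked in some preference of `D` with peak `a`. -/
def secondsSet (D : Set (Pref A)) (a : A) : Set A := {b | ∃ P ∈ D, peak P = a ∧ second P = b}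

/-- Leaf symmetry. -/
def LeafSymmetry (D : Set (Pref A)) : Prop :=
  ∀ x : A, (∃! y, (adjGraph D).Adj x y) →
    (∃ u ∈ secondsSet D x, ∃ v ∈ secondsSet D x, u ≠ v) →
    ∃ z ∈ secondsSet D x, ¬ (adjGraph D).Adj x z ∧ x ∈ secondsSet D z

/-- Unidimensionality: path-connectedness, diversity and leaf symmetry. -/
def Unidimensional (D : Set (Pref A)) : Prop :=
  PathConnectedDom D ∧ Diversity D ∧ LeafSymmetry D

/-- The unique seconds property. -/
def UniqueSeconds (D : Set (Pref A)) : Prop := ∃ x b : A, secondsSet D x = {b}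

/-- Minimal richness. -/
def MinimallyRich (D : Set (Pref A)) : Prop := ∀ a : A, ∃ P ∈ D, peak P = a

/-- The vertex set `⟨x, y|T⟩` of the (in a tree, unique) shortest path between `x` and `y`. -/
def intv (T : SimpleGraph A) (x y : A) : Set A :=
  {z | T.dist x z + T.dist z y = T.dist x y}

/-- `a'` is the projection of `a` onto `B` in `T`. -/
def IsProjPt (T : SimpleGraph A) (B : Set A) (a a' : A) : Prop :=
  a' ∈ B ∧ ∀ b ∈ B, a' ∈ intv T a b

/-- The projection `Proj(a, B)` of `a` onto a path-closed set `B` in the tree `T`. -/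
noncomputable def projOn (T : SimpleGraph A) (B : Set A) (a : A) : A :=
  if h : ∃ a', IsProjPt T B a a' then h.choose else a

/-- `Γ(P)`: the vertex set of the minimal subtree of `T` spanning all the peaks. -/
def gammaSet (T : SimpleGraph A) {n : ℕ} (P : Fin n → Pref A) : Set A :=
  {c | ∃ i j : Fin n, c ∈ intv T (peak (P i)) (peak (P j))}

/-- The projection rule on `T` w.r.t. `xbar`. -/
noncomputable def projRule (T : SimpleGraph A) (xbar : A) {n : ℕ}
    (P : Fin n → Pref A) : A :=
  projOn T (gammaSet T P) xbar

/-- Single-peakedness on a tree. -/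
def SinglePeaked (T : SimpleGraph A) (P : Pref A) : Prop :=
  ∀ c d : A, c ≠ d → c ∈ intv T (peak P) d → prefers P c d

/-- Semi-single-peakedness on `T` w.r.t. the threshold `xbar`. -/
def SemiSP (T : SimpleGraph A) (xbar : A) (P : Pref A) : Prop :=
  (∀ c d : A, c ∈ intv T (peak P) xbar → d ∈ intv T (peak P) xbar → c ≠ d →
    c ∈ intv T (peak P) d → prefers P c d) ∧
  (∀ c : A, c ∉ intv T (peak P) xbar →
    prefers P (projOn T (intv T (peak P) xbar) c) c)

/-- A semi-single-peaked domain. -/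
def SemiSPDomain (D : Set (Pref A)) : Prop :=
  ∃ (T : SimpleGraph A) (xbar : A), T.IsTree ∧
    D ⊆ {P | SemiSP T xbar P} ∧ (adjGraph D).Connected

/-- `A^{a⇀b}`: the alternatives whose path to `b` goes through `a`. -/
def sideSet (T : SimpleGraph A) (a b : A) : Set A := {z | a ∈ intv T z b}

/-- `x = max^P(B)`: `x` is `P`'s best alternative of `B`. -/
def IsBestOf (P : Pref A) (x : A) (B : Set A) : Prop :=
  x ∈ B ∧ ∀ y ∈ B, y ≠ x → prefers P x y

/-- `a` and `b` are dual-thresholds in the tree `T`. -/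
def DualThresholds (T : SimpleGraph A) (a b : A) : Prop :=
  a ≠ b ∧ ∀ c : A, c ∉ intv T a b →
    projOn T (intv T a b) c = a ∨ projOn T (intv T a b) c = b

/-- An `(a,b)`-semi-hybrid preference on `T`. -/
def SemiHybridPref (T : SimpleGraph A) (a b : A) (P : Pref A) : Prop :=
  (peak P ∈ sideSet T a b \ {a} → SemiSP T a P ∧ IsBestOf P b (sideSet T b a)) ∧
  (peak P ∈ sideSet T b a \ {b} → SemiSP T b P ∧ IsBestOf P a (sideSet T a b)) ∧
  (peak P ∈ intv T a b → IsBestOf P a (sideSet T a b) ∧ IsBestOf P b (sideSet T b a))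

/-- `x` is a leaf of the subgraph of `G` induced on `B`. -/
def IsLeafOn (G : SimpleGraph A) (B : Set A) (x : A) : Prop :=
  x ∈ B ∧ ∃! y, y ∈ B ∧ G.Adj x y

/-- `D` is an `(a,b)`-semi-hybrid domain on the tree `T`. -/
def SemiHybridDomainOn (D : Set (Pref A)) (T : SimpleGraph A) (a b : A) : Prop :=
  T.IsTree ∧ DualThresholds T a b ∧ D ⊆ {P | SemiHybridPref T a b P} ∧
  (adjGraph D).Connected ∧
  (¬ ∃ (T' : SimpleGraph A) (a' b' : A), T'.IsTree ∧ DualThresholds T' a' b' ∧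
      D ⊆ {P | SemiHybridPref T' a' b' P} ∧ intv T' a' b' ⊂ intv T a b) ∧
  ((adjGraph D).IsTree →
    ∀ x : A, IsLeafOn (adjGraph D) (intv T a b) x →
      ∃ P ∈ D, ¬ SemiSP (adjGraph D) x P)

/-- `D` is a semi-hybrid domain. -/
def SemiHybridDomain (D : Set (Pref A)) : Prop :=
  ∃ (T : SimpleGraph A) (a b : A), SemiHybridDomainOn D T a b

/-- An `(a,b)`-hybrid preference on `T`. -/
def HybridPref (T : SimpleGraph A) (a b : A) (P : Pref A) : Prop :=
  (∀ y z : A, ((y ∈ sideSet T a b ∧ z ∈ sideSet T a b) ∨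
      (y ∈ sideSet T b a ∧ z ∈ sideSet T b a)) → y ≠ z →
    y ∈ intv T (peak P) z → prefers P y z) ∧
  (peak P ∈ sideSet T a b \ {a} → IsBestOf P a (intv T a b)) ∧
  (peak P ∈ sideSet T b a \ {b} → IsBestOf P b (intv T a b))

/-- `D` is an `(a,b)`-hybrid domain on the tree `T`. -/
def HybridDomainOn (D : Set (Pref A)) (T : SimpleGraph A) (a b : A) : Prop :=
  T.IsTree ∧ DualThresholds T a b ∧ D ⊆ {P | HybridPref T a b P} ∧
  (adjGraph D).Connected ∧
  (¬ ∃ (T' : SimpleGraph A) (a' b' : A), T'.IsTree ∧ DualThresholds T' a' b' ∧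
      D ⊆ {P | HybridPref T' a' b' P} ∧ intv T' a' b' ⊂ intv T a b) ∧
  3 ≤ (intv T a b).ncard

/-- `f` is an `(a,b)`-hybrid rule on the tree `T`. -/
def IsHybridRule (D : Set (Pref A)) {n : ℕ} (f : (Fin n → Pref A) → A)
    (T : SimpleGraph A) (a b : A) : Prop :=
  T.IsTree ∧ DualThresholds T a b ∧ 3 ≤ (intv T a b).ncard ∧
  ∃ i : Fin n, ∀ P : Fin n → Pref A, InDom D P →
    (peak (P i) ∈ intv T a b → f P = peak (P i)) ∧
    (peak (P i) ∈ sideSet T a b \ {a} → f P = projOn T (gammaSet T P) a) ∧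
    (peak (P i) ∈ sideSet T b a \ {b} → f P = projOn T (gammaSet T P) b)

/-- The PNT rule on `T` w.r.t. the edge `(x, y)`, with the two distinguished voters `i, j`. -/
noncomputable def pntRule (T : SimpleGraph A) (x y : A) {n : ℕ} (i j : Fin n)
    (P : Fin n → Pref A) : A :=
  if peak (P i) ∈ sideSet T y x then peak (P i)
  else if peak (P j) ∈ sideSet T x y then projOn T (gammaSet T P) x
  else if prefers (P j) x y then x else y

/-- `(x, y)` is a critical spot in `T` for the domain `D`. -/
def CriticalSpot (D : Set (Pref A)) (T : SimpleGraph A) (x y : A) : Prop :=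
  T.Adj x y ∧
  (∀ P ∈ D, peak P ∈ sideSet T x y → SemiSP T y P) ∧
  (∀ P ∈ D, peak P ∈ sideSet T y x → IsBestOf P x (sideSet T x y)) ∧
  (∃ P ∈ D, ∃ P' ∈ D, peak P = peak P' ∧ peak P ∈ sideSet T y x ∧
    prefers P y x ∧ prefers P' x y)

/-- `x` is a path in the graph `G` (pairwise distinct, consecutive vertices adjacent). -/
def IsPathIn (G : SimpleGraph A) {v : ℕ} (x : Fin v → A) : Prop :=
  Function.Injective x ∧
  ∀ (k : ℕ) (h : k + 1 < v), G.Adj (x ⟨k, Nat.lt_of_succ_lt h⟩) (x ⟨k + 1, h⟩)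

/-- `x` is a cycle in the graph `G`. -/
def IsCycleIn (G : SimpleGraph A) {v : ℕ} (x : Fin v → A) : Prop :=
  Function.Injective x ∧
  (∀ (k : ℕ) (h : k + 1 < v), G.Adj (x ⟨k, Nat.lt_of_succ_lt h⟩) (x ⟨k + 1, h⟩)) ∧
  ∀ (h : 0 < v), G.Adj (x ⟨v - 1, Nat.sub_lt h Nat.one_pos⟩) (x ⟨0, h⟩)

/-- The line `L^A` induced by the ranking of the preference `P`. -/
noncomputable def lineOf (P : Pref A) : SimpleGraph A :=
  SimpleGraph.fromRel (fun a b =>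
    ∃ k : ℕ, k + 1 < Fintype.card A ∧ rk P k = a ∧ rk P (k + 1) = b)

/-- The median of three natural numbers. -/
def med3 (a b c : ℕ) : ℕ := max (min a b) (min (max a b) c)

/-- The two-voter profile in which voter `i` reports `Pi` and the other voter reports `Q`. -/
noncomputable def prof2 (i : Fin 2) (Pi Q : Pref A) : Fin 2 → Pref A :=
  Function.update (fun _ => Q) i Pi

def GBtw {V : Type*} (G : SimpleGraph V) (x z y : V) : Prop := ∀ p : G.Walk x y, z ∈ p.support

section BtwLemmas
variable {V : Type*} {G : SimpleGraph V}

theorem gbtw_left (x y : V) : GBtw G x x y := fun p => p.start_mem_support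
theorem gbtw_right (x y : V) : GBtw G x y y := fun p => p.end_mem_support
theorem gbtw_symm {x z y : V} (h : GBtw G x z y) : GBtw G y z x := fun p => by
  have := h p.reverse
  simpa using this
theorem gbtw_self {x z : V} (h : GBtw G x z x) : z = x := by
  have := h SimpleGraph.Walk.nil
  simpa using this
theorem gbtw_adj {x z y : V} (hxy : G.Adj x y) (h : GBtw G x z y) : z = x ∨ z = y := by
  have := h (SimpleGraph.Walk.cons hxy SimpleGraph.Walk.nil)
  simpa using this
theorem gbtw_split {x z y : V} (h : GBtw G x z y) (w : V) : GBtw G x z w ∨ GBtw G w z y := by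
  by_contra hc
  rw [not_or] at hc
  obtain ⟨h1, h2⟩ := hc
  simp only [GBtw, not_forall] at h1 h2
  obtain ⟨p, hp⟩ := h1
  obtain ⟨q, hq⟩ := h2
  have := h (p.append q)
  rw [SimpleGraph.Walk.mem_support_append_iff] at this
  tauto
theorem gbtw_trans {x v w z : V} (h1 : GBtw G x v z) (h2 : GBtw G v w z) : GBtw G x w z := by
  classical
  intro p
  exact p.support_dropUntil_subset_support (h1 p) (h2 (p.dropUntil v (h1 p)))
theorem gbtw_dist (hG : G.Connected) {x z y : V} (h : GBtw G x z y) :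
    G.dist x z + G.dist z y = G.dist x y := by
  classical
  obtain ⟨p, hp⟩ := hG.exists_walk_length_eq_dist x y
  apply le_antisymm
  · rw [← hp]
    have h1 := SimpleGraph.dist_le (p.takeUntil z (h p))
    have h2 := SimpleGraph.dist_le (p.dropUntil z (h p))
    have h3 := congrArg SimpleGraph.Walk.length (p.take_spec (h p))
    rw [SimpleGraph.Walk.length_append] at h3
    omega
  · exact hG.dist_triangle
theorem gbtw_anti (hG : G.Connected) {x y z : V} (h1 : GBtw G x y z) (h2 : GBtw G x z y) : y = z := by
  have a1 := gbtw_dist hG h1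
  have a2 := gbtw_dist hG h2
  have : G.dist y z = 0 := by omega
  exact (hG.dist_eq_zero_iff).1 this
theorem gbtw_anti' (hG : G.Connected) {x y z : V} (h1 : GBtw G z y x) (h2 : GBtw G y z x) : y = z :=
  gbtw_anti hG (gbtw_symm h1) (gbtw_symm h2)
/-- A walk leaving `S` must leave through the unique exit `v`. -/
theorem gbtw_exit {S : Set V} {v : V} (hS : ∀ s ∈ S, ∀ t, t ∉ S → G.Adj s t → s = v)
    {x y : V} (hx : x ∈ S) (hy : y ∉ S) : GBtw G x v y := by
  intro p
  induction p with
  | nil => exact absurd hx hy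
  | @cons u w z huw p ih =>
    by_cases hw : w ∈ S
    · have := ih hw hy
      simp [this]
    · have := hS u hx w hw huw
      simp [this]
theorem tree_walk_support (hT : G.IsTree) {x y z : V} (p : G.Walk x y) (hp : p.IsPath)
    (hz : z ∈ p.support) : GBtw G x z y := by
  classical
  intro q
  have := (hT.2.subsingleton_path x y).elim ⟨p, hp⟩ q.toPath
  have h2 : p = q.bypass := congrArg Subtype.val this
  rw [h2] at hz
  exact q.support_bypass_subset_support hz
theorem tree_btw_iff (hT : G.IsTree) {x z y : V} :
    G.dist x z + G.dist z y = G.dist x y ↔ GBtw G x z y := by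
  constructor
  · intro h
    obtain ⟨p, hp⟩ := hT.1.exists_walk_length_eq_dist x z
    obtain ⟨q, hq⟩ := hT.1.exists_walk_length_eq_dist z y
    refine tree_walk_support hT (p.append q) ?_ ?_
    · apply SimpleGraph.Walk.isPath_of_length_eq_dist
      rw [SimpleGraph.Walk.length_append]; omega
    · rw [SimpleGraph.Walk.mem_support_append_iff]; left; simp
  · exact gbtw_dist hT.1
theorem tree_edge (hT : G.IsTree) {x y : V} (hxy : G.Adj x y) (z : V) :
    GBtw G x y z ∨ GBtw G y x z := by
  classical
  by_cases h : GBtw G x y z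
  · exact Or.inl h
  · right
    simp only [GBtw, not_forall] at h
    obtain ⟨p, hp⟩ := h
    have h1 : y ∉ p.bypass.support := fun h => hp (p.support_bypass_subset_support h)
    refine tree_walk_support hT (SimpleGraph.Walk.cons hxy.symm p.bypass) ?_ ?_
    · exact (p.bypass_isPath).cons h1
    · simp
/-- Medians exist in trees. -/
theorem tree_median (hT : G.IsTree) (x y z : V) :
    ∃ m, GBtw G x m y ∧ GBtw G x m z ∧ GBtw G y m z := by
  obtain ⟨p⟩ := hT.1.preconnected z x
  induction p with
  | @nil x => exact ⟨x, gbtw_left _ _, gbtw_left _ _, gbtw_right _ _⟩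
  | @cons z' z x hzz p ih =>
    obtain ⟨m, h1, h2, h3⟩ := ih
    have key : ∀ t, GBtw G t m z → m ≠ z → GBtw G t m z' := by
      intro t ht hm
      rcases gbtw_split ht z' with h | h
      · exact h
      · rcases gbtw_adj hzz h with h | h
        · subst h; exact gbtw_right _ _
        · exact absurd h hm
    by_cases hm : m = z
    · subst hm
      have e := hT.1
      rcases tree_edge hT hzz x with hx | hx <;> rcases tree_edge hT hzz y with hy | hy
      · exact ⟨m, h1, gbtw_symm hx, gbtw_symm hy⟩
      · refine ⟨z', ?_, gbtw_right _ _, gbtw_right _ _⟩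
        rcases gbtw_split hy x with h | h
        · exact absurd (gbtw_anti hT.1 (gbtw_symm hx) (gbtw_symm h)) hzz.ne'
        · exact h
      · refine ⟨z', ?_, gbtw_right _ _, gbtw_right _ _⟩
        rcases gbtw_split hx y with h | h
        · exact absurd (gbtw_anti hT.1 (gbtw_symm hy) (gbtw_symm h)) hzz.ne'
        · exact gbtw_symm h
      · rcases gbtw_split h1 z' with h | h
        · exact absurd (gbtw_anti hT.1 (gbtw_symm hx) h) hzz.ne
        · exact absurd (gbtw_anti hT.1 (gbtw_symm hy) (gbtw_symm h)) hzz.ne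
    · exact ⟨m, h1, key x h2 hm, key y h3 hm⟩
end BtwLemmas

/-- Two-voter strategy-proof, tops-only rules, seen as functions of the peaks. -/
structure R2 (D : Set (Pref A)) (g : A → A → A) : Prop where
  un : ∀ x, g x x = x
  s1 : ∀ P ∈ D, ∀ x y, P.symm (g (peak P) y) ≤ P.symm (g x y)
  s2 : ∀ P ∈ D, ∀ x y, P.symm (g y (peak P)) ≤ P.symm (g y x)

theorem R2.swap {D : Set (Pref A)} {g : A → A → A} (h : R2 D g) : R2 D (fun x y => g y x) :=
  ⟨h.un, h.s2, h.s1⟩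

theorem symm_rk (P : Pref A) (k : ℕ) (hk : k < Fintype.card A) (x : A) (h : rk P k = x) :
    (P.symm x : ℕ) = k := by
  subst h
  simp [rk, hk]

theorem rk_symm (P : Pref A) (x : A) : rk P (P.symm x : ℕ) = x := by
  simp [rk]

theorem symm_peak (P : Pref A) : (P.symm (peak P) : ℕ) = 0 :=
  symm_rk P 0 Fintype.card_pos _ rfl

theorem eq_peak (P : Pref A) (v : A) (h : P.symm v ≤ P.symm (peak P)) : v = peak P := by
  have h1 := symm_peak P
  have h2 : (P.symm v : ℕ) ≤ (P.symm (peak P) : ℕ) := h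
  apply P.symm.injective
  apply Fin.ext
  omega

theorem peak_le (P : Pref A) (v : A) : P.symm (peak P) ≤ P.symm v := by
  have h1 := symm_peak P
  change (P.symm (peak P) : ℕ) ≤ (P.symm v : ℕ)
  omega

theorem dom_edge {D : Set (Pref A)} (hcard : 3 ≤ Fintype.card A) {x y : A}
    (h : DomAdjacent D x y) :
    ∃ P ∈ D, ∃ P' ∈ D, peak P = x ∧ peak P' = y ∧
      ∀ u v, P.symm u ≤ P.symm v → P'.symm v ≤ P'.symm u → u = v ∨ (u = x ∧ v = y) := by
  obtain ⟨P, hP, P', hP', h1, h2, h3, h4, h5⟩ := h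
  refine ⟨P, hP, P', hP', h1, h3, ?_⟩
  have key : ∀ w, w ≠ x → w ≠ y → (P.symm w : ℕ) = (P'.symm w : ℕ) ∧ 2 ≤ (P.symm w : ℕ) := by
    intro w hwx hwy
    have hk : 2 ≤ (P.symm w : ℕ) := by
      by_contra hc
      have hw := rk_symm P w
      have : (P.symm w : ℕ) = 0 ∨ (P.symm w : ℕ) = 1 := by omega
      rcases this with h | h
      · rw [h] at hw; exact hwx (hw.symm.trans h1)
      · rw [h] at hw; exact hwy (hw.symm.trans h2)
    have h6 := h5 _ hk
    rw [rk_symm] at h6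
    exact ⟨(symm_rk P' _ (P.symm w).2 w h6.symm).symm, hk⟩
  have a1 := symm_rk P 0 (by omega) x h1
  have a2 := symm_rk P 1 (by omega) y h2
  have a3 := symm_rk P' 0 (by omega) y h3
  have a4 := symm_rk P' 1 (by omega) x h4
  intro u v hu hv
  have hu : (P.symm u : ℕ) ≤ (P.symm v : ℕ) := hu
  have hv : (P'.symm v : ℕ) ≤ (P'.symm u : ℕ) := hv
  by_cases e1 : u = v
  · exact Or.inl e1
  right
  by_cases ux : u = x
  · refine ⟨ux, ?_⟩
    by_contra vy
    have := key v (fun h => e1 (ux.trans h.symm)) vy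
    subst ux; omega
  · exfalso
    by_cases uy : u = y
    · by_cases vx : v = x
      · subst uy vx; omega
      · have := key v vx (fun h => e1 (uy.trans h.symm))
        subst uy; omega
    · have hku := key u ux uy
      by_cases vx : v = x
      · subst vx; omega
      by_cases vy : v = y
      · subst vy; omega
      have hkv := key v vx vy
      apply e1
      apply P.symm.injective
      apply Fin.ext
      omega

/-- Standing assumptions on the domain. -/
structure Ctx (D : Set (Pref A)) : Prop where
  card : 3 ≤ Fintype.card A
  conn : (adjGraph D).Connected
  rich : ∀ x, ∃ P ∈ D, peak P = x

section RuleLemmas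
variable {D : Set (Pref A)} {g : A → A → A}

theorem R2.edge1 (C : Ctx D) (h : R2 D g) {x y : A} (hxy : (adjGraph D).Adj x y) (z : A) :
    g x z = g y z ∨ (g x z = x ∧ g y z = y) := by
  have hh : ∀ x y, DomAdjacent D x y → g x z = g y z ∨ (g x z = x ∧ g y z = y) := by
    intro x y hd
    obtain ⟨P, hP, P', hP', rfl, rfl, h3⟩ := dom_edge C.card hd
    exact h3 _ _ (h.s1 P hP _ z) (h.s1 P' hP' _ z)
  rw [adjGraph, SimpleGraph.fromRel_adj] at hxy
  rcases hxy.2 with h1 | h1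
  · exact hh _ _ h1
  · rcases hh _ _ h1 with h2 | h2
    · exact Or.inl h2.symm
    · exact Or.inr ⟨h2.2, h2.1⟩

theorem R2.fix1 (C : Ctx D) (h : R2 D g) (x z : A) : g (g x z) z = g x z := by
  obtain ⟨P, hP, hp⟩ := C.rich (g x z)
  have := h.s1 P hP x z
  rw [hp] at this
  have h2 := eq_peak P (g (g x z) z) (by rw [hp]; exact this)
  exact h2.trans hp

theorem R2.fix2 (C : Ctx D) (h : R2 D g) (x z : A) : g z (g z x) = g z x := h.swap.fix1 C x z

theorem R2.gate1 (C : Ctx D) (h : R2 D g) (x : A) {z t : A} (ht : g t z = t) :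
    GBtw (adjGraph D) x (g x z) t := by
  intro p
  induction p with
  | nil => simp [ht]
  | @cons u w t huw p ih =>
    have := ih ht
    rcases h.edge1 C huw z with h1 | h1
    · rw [h1]; simp [this]
    · rw [h1.1]; simp

theorem R2.gate2 (C : Ctx D) (h : R2 D g) (x : A) {z t : A} (ht : g z t = t) :
    GBtw (adjGraph D) x (g z x) t := h.swap.gate1 C x ht

theorem R2.conv1 (C : Ctx D) (h : R2 D g) {s t v z : A} (hs : g s z = s) (ht : g t z = t)
    (hv : GBtw (adjGraph D) s v t) : g v z = v := by
  have h1 := h.gate1 C v hs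
  have h2 := h.gate1 C v ht
  rcases gbtw_split hv (g v z) with h3 | h3
  · exact gbtw_anti C.conn (gbtw_symm h1) h3
  · exact gbtw_anti C.conn (gbtw_symm h2) (gbtw_symm h3)

theorem R2.conv2 (C : Ctx D) (h : R2 D g) {s t v z : A} (hs : g z s = s) (ht : g z t = t)
    (hv : GBtw (adjGraph D) s v t) : g z v = v := h.swap.conv1 C hs ht hv

/-- The dictatorial zone of voter 1. -/
def Z1 (g : A → A → A) : Set A := {x | ∀ z, g x z = x}

/-- The branch at `v` relative to `J`. -/
def Sb (D : Set (Pref A)) (J : Set A) (v : A) : Set A :=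
  {y | ∀ j ∈ J, GBtw (adjGraph D) y v j}

theorem Sb_self (J : Set A) (v : A) : v ∈ Sb D J v := fun j _ => gbtw_left _ _

theorem Sb_out {J : Set A} {v s t : A} (hs : s ∈ Sb D J v) (ht : t ∉ Sb D J v) :
    GBtw (adjGraph D) s v t := by
  simp only [Sb, Set.mem_ofPred_eq, not_forall] at ht
  obtain ⟨j, hj, ht⟩ := ht
  rcases gbtw_split (hs j hj) t with h | h
  · exact h
  · exact absurd h ht

theorem Sb_mem {J : Set A} {v s : A} (hs : s ∈ Sb D J v) (hj : s ∈ J) : v = s :=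
  gbtw_self (hs s hj)

theorem R2.zone_fix (C : Ctx D) (h : R2 D g) {ζ t : A} (hζ : ζ ∈ Z1 g) (ht : g t ζ = t) :
    t ∈ Z1 g := by
  intro s
  have h1 := h.fix2 C s t
  have h2 := h.gate2 C ζ h1
  rw [ht] at h2
  have h3 := h.conv1 C (hζ (g t s)) (h.un (g t s)) h2
  exact h1.symm.trans h3

theorem R2.root_mem (C : Ctx D) (h : R2 D g) {ζ : A} (hζ : ζ ∈ Z1 g) (x : A) :
    g x ζ ∈ Z1 g := h.zone_fix C hζ (h.fix1 C x ζ)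

theorem R2.root_Sb (C : Ctx D) (h : R2 D g) (z x : A) :
    x ∈ Sb D (Z1 g) (g x z) := fun j hj => h.gate1 C x (hj z)

theorem R2.zone_conv (C : Ctx D) (h : R2 D g) {s t v : A} (hs : s ∈ Z1 g) (ht : t ∈ Z1 g)
    (hv : GBtw (adjGraph D) s v t) : v ∈ Z1 g := fun z => h.conv1 C (hs z) (ht z) hv

theorem R2.tri (C : Ctx D) (h : R2 D g) (hne : (Z1 g).Nonempty) {x y : A}
    (hxy : (adjGraph D).Adj x y) :
    (x ∈ Z1 g ∧ y ∈ Z1 g) ∨ x ∈ Sb D (Z1 g) y ∨ y ∈ Sb D (Z1 g) x := by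
  have e1 : g x y = y ∨ g x y = x := by
    rcases h.edge1 C hxy y with h1 | h1
    · left; rw [h1, h.un]
    · right; exact h1.1
  have e2 : g y x = x ∨ g y x = y := by
    rcases h.edge1 C hxy.symm x with h1 | h1
    · left; rw [h1, h.un]
    · right; exact h1.1
  rcases e1 with e1 | e1
  · right; left
    have := h.root_Sb C y x
    rwa [e1] at this
  rcases e2 with e2 | e2
  · right; right
    have := h.root_Sb C x y
    rwa [e2] at this
  left
  have key : ∀ x y, (adjGraph D).Adj x y → g x y = x → g y x = y → x ∈ Z1 g := by
    intro x y hxy e1 e2 t0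
    have h1 := h.fix2 C t0 x
    by_contra hc
    set t := g x t0
    have h2 := h.gate2 C y h1
    rw [e1] at h2
    have h3 : g y t = t := by
      rcases h.edge1 C hxy t with h4 | h4
      · rw [← h4, h1]
      · exact absurd (h1.symm.trans h4.1) hc
    have h4 := h.gate2 C x h3
    rw [e2] at h4
    exact hxy.ne (gbtw_anti' C.conn h2 h4)
  exact ⟨key x y hxy e1 e2, key y x hxy.symm e2 e1⟩

theorem R2.top1 (C : Ctx D) (h : R2 D g) (hne : (Z1 g).Nonempty) {x v : A}
    (hx : x ∈ Sb D (Z1 g) v) : g x v = v := by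
  obtain ⟨ζ, hζ⟩ := hne
  by_cases he : g x v ∈ Sb D (Z1 g) v
  · set t := g x v
    have h1 : g t v = t := h.fix1 C x v
    have h3 := h.gate2 C v (h.fix2 C ζ t)
    rw [h1] at h3
    have h4 := he _ (h.root_mem C hζ t)
    exact gbtw_anti' C.conn h4 h3 |>.symm
  · exact gbtw_anti C.conn (h.gate1 C x (h.un v)) (Sb_out hx he)

theorem R2.top2 (C : Ctx D) (h : R2 D g) (hne : (Z1 g).Nonempty) {x v : A}
    (hx : x ∈ Sb D (Z1 g) v) : g v x = v := by
  obtain ⟨ζ, hζ⟩ := hne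
  by_cases he : g v x ∈ Sb D (Z1 g) v
  · set t := g v x
    have h1 : g v t = t := h.fix2 C x v
    have h3 := h.gate1 C v (hζ t)
    rw [h1] at h3
    have h4 := he _ hζ
    exact gbtw_anti' C.conn h4 h3 |>.symm
  · exact gbtw_anti C.conn (h.gate2 C x (h.un v)) (Sb_out hx he)

/-- A median separated by `w` is `w`. -/
theorem med_cross (C : Ctx D) {J : Set A} {w e x m : A} (he : e ∈ Sb D J w) (hx : x ∉ Sb D J w)
    (h1 : GBtw (adjGraph D) e m w) (h2 : GBtw (adjGraph D) x m w) : m = w := by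
  by_cases hm : m ∈ Sb D J w
  · exact gbtw_anti C.conn h2 (gbtw_symm (Sb_out hm hx))
  · exact gbtw_anti C.conn h1 (Sb_out he hm)

theorem R2.beta (C : Ctx D) (h : R2 D g) {w e : A} {P : Pref A} (hP : P ∈ D) (hw : w ∈ Z1 g)
    (hx : peak P ∉ Sb D (Z1 g) w) (he : e ∈ Sb D (Z1 g) w) : P.symm w ≤ P.symm e := by
  have h1 := h.gate1 C e (hw (peak P))
  have h2 := h.gate2 C (peak P) (h.top1 C ⟨w, hw⟩ he)
  have h3 := med_cross C he hx h1 h2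
  have h4 := h.s2 P hP e e
  rwa [h3, h.un] at h4

theorem R2.alpha (C : Ctx D) (h : R2 D g) (hne : (Z1 g).Nonempty) {v c : A} {P : Pref A}
    (hP : P ∈ D) (hx : peak P ∈ Sb D (Z1 g) v) (hc : c ∉ Sb D (Z1 g) v) :
    P.symm v ≤ P.symm c := by
  have h0 := h.s1 P hP c c
  rw [h.un] at h0
  refine le_trans ?_ h0
  set x := peak P
  have hxv := h.top1 C hne hx
  have h1 := h.gate2 C c hxv
  have hfe := h.fix2 C c x
  set e := g x c
  by_cases he : e ∈ Sb D (Z1 g) v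
  · rw [gbtw_anti C.conn h1 (gbtw_symm (Sb_out he hc))]
  · have hve : g v e = e := by
      have a1 := h.gate1 C x (h.fix1 C v e)
      rw [hfe] at a1
      have a2 := Sb_out hx he
      have a3 := h.gate1 C v (h.un e)
      rcases gbtw_split a1 v with a4 | a4
      · exact absurd (Sb_self _ v) (gbtw_anti C.conn a4 a2 ▸ he)
      · exact gbtw_anti C.conn a3 a4
    have h2 := h.s2 P hP e v
    rwa [hve, h.top2 C hne hx] at h2

theorem R2.zone_of_lt (C : Ctx D) (h : R2 D g) {P Q : Pref A} (hP : P ∈ D)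
    (hlt : P.symm (g (peak P) (peak Q)) < P.symm (g (peak Q) (peak P))) :
    g (peak P) (peak Q) ∈ Z1 g := by
  set p := peak P
  set q := peak Q
  have hpc := h.fix2 C q p
  have hcq := h.fix1 C p q
  set c := g p q
  have hcd : g q c ≠ c := by
    intro hc
    have := h.s2 P hP c q
    rw [hc] at this
    exact absurd this (not_le.2 hlt)
  intro z0
  by_contra hc
  have hz := h.fix2 C z0 c
  set z := g c z0
  have ht1 := h.gate2 C z hpc
  have hpt := h.fix2 C z p
  have hFt := h.fix1 C p z
  set t := g p z
  have htc : t ≠ c := by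
    intro e
    rw [e] at hFt
    exact hc (hz.symm.trans hFt)
  have hct : g c t = t := h.conv2 C hz (h.un c) ht1
  have hqt := h.gate2 C q hct
  rw [hcq] at hqt
  rcases gbtw_split hqt (g q t) with h1 | h1
  · exact hcd (h.conv2 C (h.un q) (h.fix2 C t q) h1)
  · have := h.conv1 C (h.fix1 C q t) (h.un t) h1
    exact htc (hct.symm.trans this)

end RuleLemmas

section Mixing
variable {D : Set (Pref A)} {f h g : A → A → A}

/-- No invariant rule, at the level of functions of the peaks. -/
def NoInv (D : Set (Pref A)) (Pl Pu : Pref A) : Prop :=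
  ∀ g : A → A → A, R2 D g → g (peak Pl) (peak Pu) ≠ g (peak Pu) (peak Pl)

theorem symm_lt_of_ne {P : Pref A} {x y : A} (h : x ≠ y) :
    P.symm x < P.symm y ∨ P.symm y < P.symm x :=
  lt_or_gt_of_ne (fun e => h (P.symm.injective e))

theorem R2.zone_pair (C : Ctx D) {Pl Pu : Pref A} (hPl : Pl ∈ D) (hPu : Pu ∈ D)
    (hrev : Reversed Pl Pu) (hN : NoInv D Pl Pu) (hg : R2 D g) :
    (g (peak Pl) (peak Pu) ∈ Z1 g ∧ g (peak Pu) (peak Pl) ∈ Z1 g) ∨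
    (g (peak Pl) (peak Pu) ∈ Z1 (fun x y => g y x) ∧
      g (peak Pu) (peak Pl) ∈ Z1 (fun x y => g y x)) := by
  have hne := hN g hg
  rcases symm_lt_of_ne (P := Pl) hne with h1 | h1
  · left
    exact ⟨hg.zone_of_lt C hPl h1, hg.zone_of_lt C hPu ((hrev _ _).1 h1)⟩
  · right
    exact ⟨hg.swap.zone_of_lt C hPu ((hrev _ _).1 h1), hg.swap.zone_of_lt C hPl h1⟩

theorem R2.zone_pair' (C : Ctx D) {Pl Pu : Pref A} (hPl : Pl ∈ D) (hPu : Pu ∈ D)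
    (hrev : Reversed Pl Pu) (hN : NoInv D Pl Pu) (hg : R2 D g) {w : A} (hw : w ∈ Z1 g) :
    g (peak Pl) (peak Pu) ∈ Z1 g ∧ g (peak Pu) (peak Pl) ∈ Z1 g := by
  rcases hg.zone_pair C hPl hPu hrev hN with h1 | h1
  · exact h1
  · exfalso
    have a1 := h1.1 w
    have a2 := h1.2 w
    simp only [hw _] at a1 a2
    exact hN g hg (a1.symm.trans a2)

/-- A rule with a common zone element for both voters is invariant. -/
theorem R2.no_common (C : Ctx D) {Pl Pu : Pref A} (hPl : Pl ∈ D) (hPu : Pu ∈ D)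
    (hrev : Reversed Pl Pu) (hN : NoInv D Pl Pu) (hg : R2 D g) {w : A} (hw : w ∈ Z1 g)
    (hw2 : ∀ z, g z w = w) : False := by
  obtain ⟨h1, h2⟩ := hg.zone_pair' C hPl hPu hrev hN hw
  have a1 := h1 w
  have a2 := h2 w
  rw [hw2] at a1 a2
  exact hN g hg (a1.symm.trans a2)

theorem mixA (C : Ctx D) (hf : R2 D f) (hh : R2 D h) {w : A} (hwf : w ∈ Z1 f) (hwh : w ∈ Z1 h) :
    R2 D (fun x y => if x ∈ Sb D (Z1 f) w then f x y else h x y) := by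
  set S := Sb D (Z1 f) w
  refine ⟨?_, ?_, ?_⟩
  · intro x
    try dsimp only
    split_ifs
    · exact hf.un x
    · exact hh.un x
  · intro P hP x' y
    try dsimp only
    by_cases hx : peak P ∈ S <;> by_cases hx' : x' ∈ S <;> simp only [hx, hx', if_true, if_false]
    · exact hf.s1 P hP x' y
    · have h1 := hf.s1 P hP w y
      rw [hwf y] at h1
      refine le_trans h1 ?_
      by_cases he : h x' y ∈ S
      · rw [gbtw_anti C.conn (hh.gate1 C x' (hwh y)) (gbtw_symm (Sb_out he hx'))]
      · exact hf.alpha C ⟨w, hwf⟩ hP hx he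
    · have h1 := hh.s1 P hP w y
      rw [hwh y] at h1
      refine le_trans h1 ?_
      by_cases he : f x' y ∈ S
      · exact hf.beta C hP hwf hx he
      · rw [gbtw_anti C.conn (hf.gate1 C x' (hwf y)) (Sb_out hx' he)]
    · exact hh.s1 P hP x' y
  · intro P hP y' x
    try dsimp only
    split_ifs
    · exact hf.s2 P hP y' x
    · exact hh.s2 P hP y' x

theorem mixB (C : Ctx D) {Pl Pu : Pref A} (hPl : Pl ∈ D) (hPu : Pu ∈ D)
    (hrev : Reversed Pl Pu) (hN : NoInv D Pl Pu) (hf : R2 D f) (hh : R2 D h)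
    (hne : (Z1 f).Nonempty) {w : A} (hwh : w ∈ Z1 h)
    (hI : Z1 h ⊆ Sb D (Z1 f) w) : False := by
  set S := Sb D (Z1 f) w
  have hwS : w ∈ S := Sb_self _ _
  have f1 : ∀ y ∈ S, f w y = w := fun y hy => hf.top2 C hne hy
  have f2 : ∀ y ∈ S, f y w = w := fun y hy => hf.top1 C hne hy
  have h2 : ∀ x, x ∉ S → h x w = w := fun x hx =>
    hh.top1 C ⟨w, hwh⟩ (fun i hi => gbtw_symm (Sb_out (hI hi) hx))
  have beta : ∀ P ∈ D, peak P ∉ S → ∀ e ∈ S, P.symm w ≤ P.symm e := by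
    intro P hP hx e he
    have a1 := hh.gate1 C (peak P) (hwh e)
    have a2 := hh.gate2 C e (h2 _ hx)
    have a3 := hh.s1 P hP e e
    rwa [med_cross C he hx a2 a1, hh.un] at a3
  have fS : ∀ x ∈ S, ∀ y ∈ S, f x y ∈ S := by
    intro x hx y hy
    by_contra he
    have := gbtw_anti C.conn (hf.gate1 C x (f1 y hy)) (Sb_out hx he)
    exact he (this ▸ hwS)
  have alpha : ∀ P ∈ D, peak P ∈ S → ∀ x y, x ∉ S → P.symm w ≤ P.symm (h x y) := by
    intro P hP hx x' y hx'
    by_cases he : h x' y ∈ S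
    · rw [gbtw_anti C.conn (hh.gate1 C x' (hwh y)) (gbtw_symm (Sb_out he hx'))]
    · exact hf.alpha C hne hP hx he
  have key : R2 D (fun x y => if x ∈ S then (if y ∈ S then f x y else w) else
      (if y ∈ S then w else h x y)) := by
    refine ⟨?_, ?_, ?_⟩
    · intro x
      try dsimp only
      split_ifs
      · exact hf.un x
      · exact hh.un x
    · intro P hP x' y
      try dsimp only
      by_cases hx : peak P ∈ S <;> by_cases hx' : x' ∈ S <;> by_cases hy : y ∈ S <;>
        simp only [hx, hx', hy, if_true, if_false, le_refl]
      · exact hf.s1 P hP x' y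
      · have := hf.s1 P hP w y
        rwa [f1 y hy] at this
      · exact alpha P hP hx _ _ hx'
      · exact beta P hP hx _ (fS _ hx' _ hy)
      · have := hh.s1 P hP w y
        rwa [hwh y] at this
      · exact hh.s1 P hP x' y
    · intro P hP x' y
      try dsimp only
      by_cases hx : peak P ∈ S <;> by_cases hx' : x' ∈ S <;> by_cases hy : y ∈ S <;>
        simp only [hx, hx', hy, if_true, if_false, le_refl]
      · exact hf.s2 P hP x' y
      · have := hf.s2 P hP w y
        rwa [f2 y hy] at this
      · exact alpha P hP hx _ _ hy
      · exact beta P hP hx _ (fS _ hy _ hx')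
      · have := hh.s2 P hP w y
        rwa [h2 y hy] at this
      · exact hh.s2 P hP x' y
  refine key.no_common C hPl hPu hrev hN (w := w) ?_ ?_
  · intro y
    try dsimp only
    rw [if_pos hwS]
    split_ifs with hy
    · exact f1 y hy
    · rfl
  · intro y
    try dsimp only
    rw [if_pos hwS, if_pos hwS]
    split_ifs with hy
    · exact f2 y hy
    · rfl

theorem mixC (C : Ctx D) {Pl Pu : Pref A} (hPl : Pl ∈ D) (hPu : Pu ∈ D)
    (hrev : Reversed Pl Pu) (hN : NoInv D Pl Pu) (hf : R2 D f) {a b : A} (hab : a ≠ b)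
    (hZ : Z1 f = {a, b}) : False := by
  have ha : a ∈ Z1 f := by rw [hZ]; simp
  have hb : b ∈ Z1 f := by rw [hZ]; simp
  set S := Sb D (Z1 f) b with hS
  have hbS : b ∈ S := Sb_self _ _
  have hSa : ∀ x, x ∉ S → x ∈ Sb D (Z1 f) a := by
    intro x hx
    have h1 := hf.root_mem C ha x
    have h2 := hf.root_Sb C a x
    have h3 : f x a = a ∨ f x a = b := by rw [hZ] at h1; exact h1
    rcases h3 with h3 | h3
    · rwa [h3] at h2
    · rw [h3] at h2; exact absurd h2 hx
  have hba : b ∉ Sb D (Z1 f) a := fun h => hab (Sb_mem h hb)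
  have fS : ∀ x ∈ S, ∀ y, f x y ∈ S := by
    intro x hx y
    by_contra he
    have := gbtw_anti C.conn (hf.gate1 C x (hb y)) (Sb_out hx he)
    exact he (this ▸ hbS)
  have fN : ∀ x, x ∉ S → ∀ P ∈ D, peak P ∈ S → ∀ y, P.symm b ≤ P.symm (f x y) := by
    intro x hx P hP hy y
    by_cases he : f x y ∈ S
    · rw [gbtw_anti C.conn (hf.gate1 C x (hb y)) (gbtw_symm (Sb_out he hx))]
    · exact hf.alpha C ⟨b, hb⟩ hP hy he
  have key : R2 D (fun x y => if x ∉ S ∧ y ∈ S then b else f x y) := by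
    refine ⟨?_, ?_, ?_⟩
    · intro x
      try dsimp only
      rw [if_neg (by tauto), hf.un]
    · intro P hP x' y
      try dsimp only
      by_cases hx : peak P ∈ S <;> by_cases hx' : x' ∈ S <;> by_cases hy : y ∈ S <;>
        simp only [hx, hx', hy, not_true_eq_false, not_false_eq_true, and_true, and_false,
          if_true, if_false, le_refl]
      · exact hf.s1 P hP x' y
      · exact hf.s1 P hP x' y
      · have := hf.s1 P hP b y
        rwa [hb y] at this
      · exact hf.s1 P hP x' y
      · exact hf.beta C hP hb hx (fS _ hx' _)
      · exact hf.s1 P hP x' y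
      · exact hf.s1 P hP x' y
    · intro P hP x' y
      try dsimp only
      by_cases hx : peak P ∈ S <;> by_cases hx' : x' ∈ S <;> by_cases hy : y ∈ S <;>
        simp only [hx, hx', hy, not_true_eq_false, not_false_eq_true, and_true, and_false,
          if_true, if_false, le_refl]
      · exact hf.s2 P hP x' y
      · exact hf.s2 P hP x' y
      · exact fN y hy P hP hx _
      · exact hf.s2 P hP x' y
      · have h1 := hf.s2 P hP a y
        rw [hf.top1 C ⟨b, hb⟩ (hSa y hy)] at h1
        exact le_trans h1 (hf.alpha C ⟨b, hb⟩ hP (hSa _ hx) hba)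
      · exact hf.s2 P hP x' y
      · exact hf.s2 P hP x' y
  refine key.no_common C hPl hPu hrev hN (w := b) ?_ ?_
  · intro y
    try dsimp only
    rw [if_neg (by tauto), hb]
  · intro y
    try dsimp only
    split_ifs with hy
    · rfl
    · exact hf.top1 C ⟨b, hb⟩ (by tauto)

/-- If the zone of `h` is not inside the zone of `f`, there is a rule with a smaller zone. -/
theorem zone_shrink (C : Ctx D) {Pl Pu : Pref A} (hPl : Pl ∈ D) (hPu : Pu ∈ D)
    (hrev : Reversed Pl Pu) (hN : NoInv D Pl Pu) (hf : R2 D f) (hh : R2 D h)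
    (hfne : (Z1 f).Nonempty) (hns : ¬ Z1 h ⊆ Z1 f) :
    ∃ k, R2 D k ∧ (Z1 k).Nonempty ∧ Z1 k ⊂ Z1 h := by
  rw [Set.not_subset] at hns
  obtain ⟨u, huh, huf⟩ := hns
  obtain ⟨ζ, hζ⟩ := hfne
  have hr := hf.root_mem C hζ u
  have hur := hf.root_Sb C ζ u
  set r := f u ζ
  by_cases hrh : r ∈ Z1 h
  · refine ⟨_, mixA C hf hh hr hrh, ⟨r, ?_⟩, ?_⟩
    · intro y
      try dsimp only
      rw [if_pos (Sb_self _ _), hr]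
    · rw [Set.ssubset_iff_of_subset]
      · refine ⟨u, huh, fun hc => huf ?_⟩
        intro y
        have := hc y
        try dsimp only at this
        rwa [if_pos hur] at this
      · intro x hx
        by_cases hxS : x ∈ Sb D (Z1 f) r
        · have : x ∈ Z1 f := by
            intro y
            have := hx y
            try dsimp only at this
            rwa [if_pos hxS] at this
          rw [← Sb_mem hxS this]; exact hrh
        · intro y
          have := hx y
          try dsimp only at this
          rwa [if_neg hxS] at this
  · exfalso
    have hw := hh.root_mem C huh r
    have hrw := hh.root_Sb C u r
    refine mixB C hPl hPu hrev hN hf hh ⟨ζ, hζ⟩ hw ?_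
    intro i hi ξ hξ
    have hir : i ∈ Sb D (Z1 f) r := by
      by_contra hc
      exact hrh (hh.zone_conv C huh hi (Sb_out hur hc))
    exact gbtw_symm (gbtw_trans (gbtw_symm (hir ξ hξ)) (hrw i hi))

end Mixing

/-- A graph given by a parent function with decreasing heights is a tree. -/
theorem parent_tree (π : A → A) (ht : A → ℕ) (r : A) (hπ : ∀ x, x ≠ r → ht (π x) < ht x) :
    (SimpleGraph.fromRel (fun x y => x ≠ r ∧ π x = y)).IsTree := by
  set T := SimpleGraph.fromRel (fun x y => x ≠ r ∧ π x = y) with hT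
  have hreach : ∀ n, ∀ x, ht x = n → T.Reachable x r := by
    intro n
    induction n using Nat.strong_induction_on with
    | _ n ih =>
      intro x hx
      by_cases hxr : x = r
      · rw [hxr]
      · have h1 := hπ x hxr
        have h2 : T.Adj x (π x) := by
          rw [hT, SimpleGraph.fromRel_adj]
          refine ⟨?_, Or.inl ⟨hxr, rfl⟩⟩
          intro e
          rw [← e] at h1
          exact lt_irrefl _ h1
        exact h2.reachable.trans (ih _ (hx ▸ h1) _ rfl)
  have hconn : T.Connected := by
    rw [SimpleGraph.connected_iff]
    exact ⟨fun x y => (hreach _ x rfl).trans (hreach _ y rfl).symm, ⟨r⟩⟩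
  rw [SimpleGraph.isTree_iff_connected_and_card]
  refine ⟨hconn, ?_⟩
  have h1 := hconn.card_vert_le_card_edgeSet_add_one
  have h2 : T.edgeSet ⊆ (fun x => s(x, π x)) '' ({r}ᶜ : Set A) := by
    intro e he
    induction e using Sym2.ind with
    | _ x y =>
      rw [SimpleGraph.mem_edgeSet, hT, SimpleGraph.fromRel_adj] at he
      rcases he.2 with h | h
      · exact ⟨x, h.1, by simp [h.2]⟩
      · exact ⟨y, h.1, by simp [h.2, Sym2.eq_swap]⟩
  have h3 : T.edgeSet.ncard ≤ ({r}ᶜ : Set A).ncard :=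
    (Set.ncard_le_ncard h2 (Set.toFinite _)).trans (Set.ncard_image_le (Set.toFinite _))
  have h4 := Set.ncard_add_ncard_compl ({r} : Set A)
  rw [Set.ncard_singleton] at h4
  rw [Nat.card_coe_set_eq] at *
  omega

/-- Trees compatible with the dictatorial zone of `g`. -/
structure ZT (D : Set (Pref A)) (g : A → A → A) (T : SimpleGraph A) (a b : A) : Prop where
  tree : T.IsTree
  edge : ∀ x y, T.Adj x y → (adjGraph D).Adj x y ∨ (x ∈ Z1 g ∧ y ∈ Z1 g)
  zone : ∀ z, GBtw T a z b ↔ z ∈ Z1 g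
  ne : a ≠ b
  single : ∀ ζ ∈ Z1 g, ζ ≠ a → ζ ≠ b → ∀ x ∈ Sb D (Z1 g) ζ, x = ζ

section ZoneTree
variable {D : Set (Pref A)} {g : A → A → A}

theorem root_unique (C : Ctx D) {J : Set A} {r r' x : A} (hr : r ∈ J) (hr' : r' ∈ J)
    (h : x ∈ Sb D J r) (h' : x ∈ Sb D J r') : r = r' :=
  gbtw_anti C.conn (h r' hr') (h' r hr)

theorem Sb_trans {J : Set A} {x y z : A} (h1 : x ∈ Sb D J y) (h2 : y ∈ Sb D J z) :
    x ∈ Sb D J z := fun j hj => gbtw_trans (h1 j hj) (h2 j hj)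

theorem Sb_exit (C : Ctx D) (hg : R2 D g) (hne : (Z1 g).Nonempty) {v s t : A}
    (hs : s ∈ Sb D (Z1 g) v) (ht : t ∉ Sb D (Z1 g) v)
    (hst : (adjGraph D).Adj s t ∨ (s ∈ Z1 g ∧ t ∈ Z1 g)) : s = v := by
  rcases hst with h | h
  · rcases hg.tri C hne h with h1 | h1 | h1
    · exact (Sb_mem hs h1.1).symm
    · rcases gbtw_adj h (Sb_out hs ht) with h2 | h2
      · exact h2.symm
      · exact absurd (Sb_self _ _) (h2 ▸ ht)
    · exact absurd (Sb_trans h1 hs) ht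
  · exact (Sb_mem hs h.1).symm

/-- Existence of the parent outside of the zone. -/
theorem exists_parent (C : Ctx D) (hg : R2 D g) {a : A} (ha : a ∈ Z1 g) {x : A}
    (hx : x ∉ Z1 g) : ∃ y, (adjGraph D).Adj x y ∧ x ∈ Sb D (Z1 g) y := by
  by_contra hc
  push Not at hc
  obtain ⟨p⟩ := C.conn.preconnected x a
  have key : ∀ s t (p : (adjGraph D).Walk s t), s ∈ Sb D (Z1 g) x → t ∉ Sb D (Z1 g) x → False := by
    intro s t p
    induction p with
    | nil => intro h1 h2; exact h2 h1
    | @cons u w t huw p ih =>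
      intro h1 h2
      by_cases hw : w ∈ Sb D (Z1 g) x
      · exact ih hw h2
      · have e := Sb_exit C hg ⟨a, ha⟩ h1 hw (Or.inl huw)
        subst e
        rcases hg.tri C ⟨a, ha⟩ huw with h3 | h3 | h3
        · exact hx h3.1
        · exact hc w huw h3
        · exact hw h3
  exact key x a p (Sb_self _ _) (fun h => hx ((Sb_mem h ha) ▸ ha))

theorem exists_enum {Z : Set A} {a b : A} (ha : a ∈ Z) (hb : b ∈ Z) (hab : a ≠ b) :
    ∃ (n : ℕ) (e : Z ≃ Fin (n + 2)), e ⟨a, ha⟩ = 0 ∧ e ⟨b, hb⟩ = Fin.last (n + 1) := by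
  have hc : 1 < Fintype.card Z := Fintype.one_lt_card_iff.2
    ⟨⟨a, ha⟩, ⟨b, hb⟩, fun h => hab (congrArg Subtype.val h)⟩
  obtain ⟨n, hn⟩ : ∃ n, Fintype.card Z = n + 2 := ⟨Fintype.card Z - 2, by omega⟩
  let e0 := Fintype.equivFinOfCardEq hn
  let e1 := e0.trans (Equiv.swap (e0 ⟨a, ha⟩) 0)
  have h1 : e1 ⟨a, ha⟩ = 0 := by simp [e1]
  have h2 : e1 ⟨b, hb⟩ ≠ 0 := by
    rw [← h1]
    intro h
    exact hab (congrArg Subtype.val (e1.injective h)).symm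
  let e2 := e1.trans (Equiv.swap (e1 ⟨b, hb⟩) (Fin.last (n + 1)))
  refine ⟨n, e2, ?_, ?_⟩
  · change Equiv.swap (e1 ⟨b, hb⟩) (Fin.last (n + 1)) (e1 ⟨a, ha⟩) = 0
    rw [h1]
    exact Equiv.swap_apply_of_ne_of_ne h2.symm (by simp [Fin.ext_iff])
  · change Equiv.swap (e1 ⟨b, hb⟩) (Fin.last (n + 1)) (e1 ⟨b, hb⟩) = _
    simp

theorem exists_ZT (C : Ctx D) (hg : R2 D g) {a b : A} (ha : a ∈ Z1 g) (hb : b ∈ Z1 g)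
    (hab : a ≠ b)
    (single : ∀ ζ ∈ Z1 g, ζ ≠ a → ζ ≠ b → ∀ x ∈ Sb D (Z1 g) ζ, x = ζ) :
    ∃ T, ZT D g T a b := by
  obtain ⟨n, e, ea, eb⟩ := exists_enum ha hb hab
  have hpar : ∀ x, ∃ y, (∀ hx : x ∈ Z1 g, ∃ hy : y ∈ Z1 g,
      (e ⟨y, hy⟩ : ℕ) = (e ⟨x, hx⟩ : ℕ) - 1) ∧
      (x ∉ Z1 g → (adjGraph D).Adj x y ∧ x ∈ Sb D (Z1 g) y) := by
    intro x
    by_cases hx : x ∈ Z1 g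
    · have hlt : (e ⟨x, hx⟩ : ℕ) - 1 < n + 2 := by have := (e ⟨x, hx⟩).2; omega
      refine ⟨(e.symm ⟨(e ⟨x, hx⟩ : ℕ) - 1, hlt⟩ : A), ?_, fun h => absurd hx h⟩
      intro _
      exact ⟨(e.symm ⟨(e ⟨x, hx⟩ : ℕ) - 1, hlt⟩).2, by simp⟩
    · obtain ⟨y, hy⟩ := exists_parent C hg ha hx
      exact ⟨y, fun h => absurd h hx, fun _ => hy⟩
  choose π hπ1 hπ2 using hpar
  let ht : A → ℕ := fun x => if hx : x ∈ Z1 g then (e ⟨x, hx⟩ : ℕ) else n + 2 + (adjGraph D).dist x a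
  have hdec : ∀ x, x ≠ a → ht (π x) < ht x := by
    intro x hxa
    by_cases hx : x ∈ Z1 g
    · obtain ⟨hy, h1⟩ := hπ1 x hx
      simp only [ht, hx, hy, dif_pos]
      have : (e ⟨x, hx⟩ : ℕ) ≠ 0 := by
        intro h0
        have : e ⟨x, hx⟩ = e ⟨a, ha⟩ := by rw [ea]; exact Fin.ext h0
        exact hxa (congrArg Subtype.val (e.injective this))
      omega
    · obtain ⟨h1, h2⟩ := hπ2 x hx
      have h3 := gbtw_dist C.conn (h2 a ha)
      have h4 := SimpleGraph.dist_eq_one_iff_adj.2 h1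
      by_cases hy : π x ∈ Z1 g
      · simp only [ht, hx, hy, dif_pos, dif_neg, not_false_eq_true]
        have := (e ⟨π x, hy⟩).2
        omega
      · simp only [ht, hx, hy, dif_neg, not_false_eq_true]
        omega
  have hedge : ∀ x y, (SimpleGraph.fromRel (fun x y => x ≠ a ∧ π x = y)).Adj x y →
      ((adjGraph D).Adj x y ∧ (x ∈ Sb D (Z1 g) y ∨ y ∈ Sb D (Z1 g) x)) ∨
      (∃ hx : x ∈ Z1 g, ∃ hy : y ∈ Z1 g, (e ⟨y, hy⟩ : ℕ) ≤ (e ⟨x, hx⟩ : ℕ) + 1) := by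
    intro x y hxy
    rw [SimpleGraph.fromRel_adj] at hxy
    rcases hxy.2 with ⟨-, h⟩ | ⟨-, h⟩
    · subst h
      by_cases hx : x ∈ Z1 g
      · right
        obtain ⟨hy, h1⟩ := hπ1 x hx
        exact ⟨hx, hy, by omega⟩
      · left
        exact ⟨(hπ2 x hx).1, Or.inl (hπ2 x hx).2⟩
    · subst h
      by_cases hx : y ∈ Z1 g
      · right
        obtain ⟨hy, h1⟩ := hπ1 y hx
        exact ⟨hy, hx, by omega⟩
      · left
        exact ⟨(hπ2 y hx).1.symm, Or.inr (hπ2 y hx).2⟩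
  have hedge' : ∀ x y, (SimpleGraph.fromRel (fun x y => x ≠ a ∧ π x = y)).Adj x y →
      (adjGraph D).Adj x y ∨ (x ∈ Z1 g ∧ y ∈ Z1 g) := by
    intro x y hxy
    rcases hedge x y hxy with h | ⟨hx, hy, -⟩
    · exact Or.inl h.1
    · exact Or.inr ⟨hx, hy⟩
  have htree := parent_tree π ht a hdec
  refine ⟨_, htree, hedge', ?_, hab, single⟩
  intro z
  constructor
  · intro hz
    have hρ := hg.root_mem C ha z
    have hzρ := hg.root_Sb C a z
    set ρ := g z a
    have key : ∀ w ∈ Z1 g, GBtw (SimpleGraph.fromRel (fun x y => x ≠ a ∧ π x = y)) z ρ w := by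
      intro w hw
      by_cases hwS : w ∈ Sb D (Z1 g) ρ
      · rw [← Sb_mem hwS hw]; exact gbtw_right _ _
      · exact gbtw_exit (fun s hs t ht hst =>
          Sb_exit C hg ⟨a, ha⟩ hs ht (hedge' s t hst)) hzρ hwS
    rcases gbtw_split hz ρ with h1 | h1
    · rw [gbtw_anti htree.1 h1 (gbtw_symm (key a ha))]; exact hρ
    · rw [gbtw_anti' htree.1 h1 (key b hb)]; exact hρ
  · intro hz
    by_cases hzb : z = b
    · rw [hzb]; exact gbtw_right _ _
    refine gbtw_exit (S := {x | ∀ ζ, ∀ hζ : ζ ∈ Z1 g, x ∈ Sb D (Z1 g) ζ →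
      (e ⟨ζ, hζ⟩ : ℕ) ≤ (e ⟨z, hz⟩ : ℕ)}) ?_ ?_ ?_
    · intro s hs t ht hst
      simp only [Set.mem_ofPred_eq, not_forall, not_le] at hs ht
      obtain ⟨ζ, hζ, htζ, hlt⟩ := ht
      rcases hedge s t hst with ⟨-, h | h⟩ | ⟨hsZ, htZ, h⟩
      · exact absurd (hs ζ hζ (Sb_trans h htζ)) (not_le.2 hlt)
      · have h1 := hg.root_mem C ha s
        have h2 := hg.root_Sb C a s
        have h3 := root_unique C h1 hζ (Sb_trans h h2) htζ
        have := hs _ h1 h2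
        simp only [h3] at this
        omega
      · have h1 := Sb_mem htζ htZ
        subst h1
        have h2 := hs s hsZ (Sb_self _ _)
        have h3 : e ⟨s, hsZ⟩ = e ⟨z, hz⟩ := Fin.ext (by omega)
        exact congrArg Subtype.val (e.injective h3)
    · intro ζ hζ h
      have := Sb_mem h ha
      subst this
      simp [ea]
    · intro h
      have h1 := h b hb (Sb_self _ _)
      rw [eb] at h1
      have h2 : e ⟨z, hz⟩ = e ⟨b, hb⟩ := by
        rw [eb]
        apply Fin.ext
        have := (e ⟨z, hz⟩).2
        simp only [Fin.val_last] at h1 ⊢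
        omega
      exact hzb (congrArg Subtype.val (e.injective h2))

end ZoneTree

section TreeFacts
variable {T : SimpleGraph A}

theorem mem_intv_iff (hT : T.IsTree) {x z y : A} : z ∈ intv T x y ↔ GBtw T x z y :=
  tree_btw_iff hT

theorem mem_side_iff (hT : T.IsTree) {x a b : A} : x ∈ sideSet T a b ↔ GBtw T x a b :=
  tree_btw_iff hT

theorem projOn_eq (hT : T.IsTree) {B : Set A} {a m : A} (h : IsProjPt T B a m) :
    projOn T B a = m := by
  have hex : ∃ a', IsProjPt T B a a' := ⟨m, h⟩
  have h1 : projOn T B a = hex.choose := by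
    unfold projOn
    rw [dif_pos hex]
  have h2 := hex.choose_spec
  rw [h1]
  exact gbtw_anti hT.1 ((mem_intv_iff hT).1 (h2.2 _ h.1)) ((mem_intv_iff hT).1 (h.2 _ h2.1))

theorem med_eq (hT : T.IsTree) {x c a m : A} (h1 : GBtw T x c a) (h2 : GBtw T x m c)
    (h3 : GBtw T c m a) : m = c := by
  rcases gbtw_split h1 m with h | h
  · exact gbtw_anti hT.1 h2 h
  · exact (gbtw_anti' hT.1 h h3).symm

theorem med_gamma (hT : T.IsTree) {u v m a γ : A} (hu : GBtw T u m a) (hv : GBtw T v m a)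
    (hγ : GBtw T u γ v) : GBtw T a m γ := by
  rcases gbtw_split hu γ with h1 | h1
  · rcases gbtw_split hv γ with h2 | h2
    · rcases gbtw_split hγ m with h3 | h3
      · rw [gbtw_anti hT.1 h3 h1]; exact gbtw_right _ _
      · rw [gbtw_anti hT.1 (gbtw_symm h3) h2]; exact gbtw_right _ _
    · exact gbtw_symm h2
  · exact gbtw_symm h1

theorem proj_intv (hT : T.IsTree) {u v m a : A} (h : GBtw T u m v) (hu : GBtw T u m a)
    (hv : GBtw T v m a) : projOn T (intv T u v) a = m := by
  apply projOn_eq hT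
  exact ⟨(mem_intv_iff hT).2 h, fun γ hγ =>
    (mem_intv_iff hT).2 (med_gamma hT hu hv ((mem_intv_iff hT).1 hγ))⟩

theorem proj_gamma (hT : T.IsTree) {P : Fin 2 → Pref A} {m a : A}
    (h : GBtw T (peak (P 0)) m (peak (P 1))) (hu : GBtw T (peak (P 0)) m a)
    (hv : GBtw T (peak (P 1)) m a) : projOn T (gammaSet T P) a = m := by
  apply projOn_eq hT
  refine ⟨⟨0, 1, (mem_intv_iff hT).2 h⟩, ?_⟩
  rintro γ ⟨i, j, hγ⟩
  have hall : ∀ i, GBtw T (peak (P i)) m a := by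
    intro i
    fin_cases i
    · exact hu
    · exact hv
  exact (mem_intv_iff hT).2 (med_gamma hT (hall i) (hall j) ((mem_intv_iff hT).1 hγ))

end TreeFacts

theorem pref_of_le {P : Pref A} {x y : A} (h : P.symm x ≤ P.symm y) (hne : x ≠ y) :
    prefers P x y := lt_of_le_of_ne h (fun e => hne (P.symm.injective e))

section ZTFacts
variable {D : Set (Pref A)} {g : A → A → A} {T : SimpleGraph A} {a b : A}

theorem ZT.swap (Z : ZT D g T a b) : ZT D g T b a :=
  ⟨Z.tree, Z.edge, fun z => ⟨fun h => (Z.zone z).1 (gbtw_symm h), fun h => gbtw_symm ((Z.zone z).2 h)⟩,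
    Z.ne.symm, fun ζ h h1 h2 => Z.single ζ h h2 h1⟩

theorem ZT.amem (Z : ZT D g T a b) : a ∈ Z1 g := (Z.zone a).1 (gbtw_left _ _)

theorem ZT.intv_eq (Z : ZT D g T a b) : intv T a b = Z1 g := by
  ext z
  rw [mem_intv_iff Z.tree, Z.zone]

theorem ZT.exit (C : Ctx D) (hg : R2 D g) (Z : ZT D g T a b) {v x y : A}
    (hx : x ∈ Sb D (Z1 g) v) (hy : y ∉ Sb D (Z1 g) v) : GBtw T x v y :=
  gbtw_exit (fun s hs t ht hst => Sb_exit C hg ⟨a, Z.amem⟩ hs ht (Z.edge s t hst)) hx hy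

theorem ZT.side (C : Ctx D) (hg : R2 D g) (Z : ZT D g T a b) {x : A} :
    x ∈ sideSet T a b ↔ x ∈ Sb D (Z1 g) a := by
  rw [mem_side_iff Z.tree]
  constructor
  · intro h
    have hρ := hg.root_mem C Z.amem x
    have hxρ := hg.root_Sb C a x
    set ρ := g x a
    by_cases e : ρ = a
    · rwa [e] at hxρ
    · exfalso
      have h1 := Z.exit C hg hxρ (fun hh => e (Sb_mem hh Z.amem))
      have h2 := (Z.zone ρ).2 hρ
      rcases gbtw_split h ρ with h3 | h3
      · exact e (gbtw_anti Z.tree.1 h1 h3)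
      · exact e (gbtw_anti' Z.tree.1 h2 h3)
  · intro h
    exact Z.exit C hg h (fun hh => Z.ne (Sb_mem hh Z.swap.amem))

theorem ZT.dual (C : Ctx D) (hg : R2 D g) (Z : ZT D g T a b) : DualThresholds T a b := by
  refine ⟨Z.ne, fun c hc => ?_⟩
  rw [Z.intv_eq] at hc
  have hρ := hg.root_mem C Z.amem c
  have hcρ := hg.root_Sb C a c
  set ρ := g c a
  have h0 : projOn T (intv T a b) c = ρ := by
    apply projOn_eq Z.tree
    rw [Z.intv_eq]
    refine ⟨hρ, fun w hw => (mem_intv_iff Z.tree).2 ?_⟩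
    by_cases hwS : w ∈ Sb D (Z1 g) ρ
    · rw [← Sb_mem hwS hw]; exact gbtw_right _ _
    · exact Z.exit C hg hcρ hwS
  rw [h0]
  by_contra hcon
  rw [not_or] at hcon
  have := Z.single ρ hρ hcon.1 hcon.2 c hcρ
  exact hc (this ▸ hρ)

theorem ZT.lift (C : Ctx D) (hg : R2 D g) (Z : ZT D g T a b) {x e y : A} (he : e ∉ Z1 g)
    (h : GBtw (adjGraph D) x e y) : GBtw T x e y := by
  intro p
  by_contra hp
  revert h
  induction p with
  | nil =>
    intro h
    simp only [SimpleGraph.Walk.support_nil, List.mem_singleton] at hp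
    exact hp (gbtw_self h)
  | @cons u w t huw p ih =>
    intro h
    rw [SimpleGraph.Walk.support_cons, List.mem_cons, not_or] at hp
    rcases gbtw_split h w with h1 | h1
    · rcases Z.edge u w huw with h2 | h2
      · rcases gbtw_adj h2 h1 with h3 | h3
        · exact hp.1 h3
        · exact hp.2 (h3 ▸ p.start_mem_support)
      · exact he (hg.zone_conv C h2.1 h2.2 h1)
    · exact ih hp.2 h1

theorem ZT.lift2 (C : Ctx D) (hg : R2 D g) (Z : ZT D g T a b) {x y s : A}
    (hx : x ∈ Sb D (Z1 g) s) (h : GBtw (adjGraph D) x s y) : GBtw T x s y := by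
  intro p
  by_contra hp
  revert h hx
  induction p with
  | nil =>
    intro hx h
    simp only [SimpleGraph.Walk.support_nil, List.mem_singleton] at hp
    exact hp (gbtw_self h)
  | @cons u w t huw p ih =>
    intro hx h
    rw [SimpleGraph.Walk.support_cons, List.mem_cons, not_or] at hp
    have hG : (adjGraph D).Adj u w := by
      rcases Z.edge u w huw with h2 | h2
      · exact h2
      · exact absurd (Sb_mem hx h2.1) hp.1
    have hw : w ∈ Sb D (Z1 g) s := by
      by_contra hc
      exact hp.1 (Sb_exit C hg ⟨a, Z.amem⟩ hx hc (Or.inl hG)).symm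
    rcases gbtw_split h w with h1 | h1
    · rcases gbtw_adj hG h1 with h3 | h3
      · exact hp.1 h3
      · exact hp.2 (h3 ▸ p.start_mem_support)
    · exact ih hp.2 hw h1

theorem ZT.med (C : Ctx D) (hg : R2 D g) (Z : ZT D g T a b) {x : A} (y : A)
    (hx : x ∈ Sb D (Z1 g) a) :
    GBtw T x (g x y) y ∧ GBtw T x (g x y) a ∧ GBtw T y (g x y) a := by
  have h1 := hg.gate1 C x (hg.un y)
  have h2 := hg.gate1 C x (Z.amem y)
  have h3 := hg.gate2 C y (hg.top1 C ⟨a, Z.amem⟩ hx)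
  by_cases hm : g x y ∈ Z1 g
  · have e := gbtw_anti C.conn h2 (hx _ hm)
    rw [e] at h1 ⊢
    exact ⟨Z.lift2 C hg hx h1, gbtw_right _ _, gbtw_right _ _⟩
  · exact ⟨Z.lift C hg hm h1, Z.lift C hg hm h2, Z.lift C hg hm h3⟩

theorem ZT.semiSP (C : Ctx D) (hg : R2 D g) (Z : ZT D g T a b) {P : Pref A} (hP : P ∈ D)
    (hx : peak P ∈ Sb D (Z1 g) a) : SemiSP T a P := by
  refine ⟨?_, ?_⟩
  · intro c d hc hd hcd hxcd
    rw [mem_intv_iff Z.tree] at hc hd hxcd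
    have h1 := Z.med C hg c hx
    have e1 := med_eq Z.tree hc h1.1 h1.2.2
    have hdS : d ∈ Sb D (Z1 g) a := by
      rw [← Z.side C hg, mem_side_iff Z.tree]
      rw [← Z.side C hg, mem_side_iff Z.tree] at hx
      rcases gbtw_split hx d with h | h
      · rw [gbtw_anti Z.tree.1 hd h]; exact gbtw_left _ _
      · exact h
    have h2 := Z.med C hg c hdS
    have h3 : GBtw T c d a := by
      rcases gbtw_split hd c with h | h
      · exact absurd (gbtw_anti Z.tree.1 hxcd h) hcd
      · exact h
    have e2 := med_eq Z.tree h3 (gbtw_symm h2.1) h2.2.1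
    have h4 := hg.s1 P hP d c
    rw [e1, e2] at h4
    exact pref_of_le h4 hcd
  · intro c hc
    have h1 := Z.med C hg c hx
    rw [proj_intv Z.tree h1.2.1 h1.1 (gbtw_symm h1.2.2)]
    have h4 := hg.s1 P hP c c
    rw [hg.un] at h4
    refine pref_of_le h4 ?_
    intro e
    apply hc
    rw [mem_intv_iff Z.tree]
    have := h1.2.1
    rwa [e] at this

theorem ZT.best (C : Ctx D) (hg : R2 D g) (Z : ZT D g T a b) {P : Pref A} (hP : P ∈ D)
    (hx : peak P = a ∨ peak P ∉ Sb D (Z1 g) a) : IsBestOf P a (sideSet T a b) := by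
  refine ⟨(Z.side C hg).2 (Sb_self _ _), fun y hy hya => ?_⟩
  rw [Z.side C hg] at hy
  apply pref_of_le _ hya.symm
  rcases hx with h | h
  · rw [← h]; exact peak_le P y
  · exact hg.beta C hP Z.amem h hy

theorem ZT.semiHybrid (C : Ctx D) (hg : R2 D g) (Z : ZT D g T a b) {P : Pref A} (hP : P ∈ D) :
    SemiHybridPref T a b P := by
  refine ⟨?_, ?_, ?_⟩
  · rintro ⟨h1, h2⟩
    rw [Z.side C hg] at h1
    exact ⟨Z.semiSP C hg hP h1, Z.swap.best C hg hP (Or.inr fun h =>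
      Z.ne (root_unique C Z.amem Z.swap.amem h1 h))⟩
  · rintro ⟨h1, h2⟩
    rw [Z.swap.side C hg] at h1
    exact ⟨Z.swap.semiSP C hg hP h1, Z.best C hg hP (Or.inr fun h =>
      Z.ne (root_unique C Z.amem Z.swap.amem h h1))⟩
  · intro h
    rw [Z.intv_eq] at h
    have key : ∀ v, peak P = v ∨ peak P ∉ Sb D (Z1 g) v := by
      intro v
      by_cases hv : peak P ∈ Sb D (Z1 g) v
      · exact Or.inl (Sb_mem hv h).symm
      · exact Or.inr hv
    exact ⟨Z.best C hg hP (key _), Z.swap.best C hg hP (key _)⟩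

/-- Every rule with nonempty zone comes with a compatible tree. -/
theorem R2.exists_tree (C : Ctx D) {Pl Pu : Pref A} (hPl : Pl ∈ D) (hPu : Pu ∈ D)
    (hrev : Reversed Pl Pu) (hN : NoInv D Pl Pu) (hg : R2 D g) (hne : (Z1 g).Nonempty) :
    ∃ T a b, ZT D g T a b := by
  obtain ⟨w, hw⟩ := hne
  obtain ⟨hc, hd⟩ := hg.zone_pair' C hPl hPu hrev hN hw
  have hcd := hN g hg
  have hp := hg.root_Sb C (peak Pu) (peak Pl)
  have hq := hg.root_Sb C (peak Pl) (peak Pu)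
  set c := g (peak Pl) (peak Pu)
  set d := g (peak Pu) (peak Pl)
  obtain ⟨T, hT⟩ := exists_ZT C hg hc hd hcd (by
    intro ζ hζ h1 h2 x hx
    have a1 := hg.beta C hPl hζ (fun h => h1 (root_unique C hζ hc h hp)) hx
    have a2 := hg.beta C hPu hζ (fun h => h2 (root_unique C hζ hd h hq)) hx
    by_contra hne
    have b1 : prefers Pl ζ x := pref_of_le a1 (Ne.symm hne)
    have b2 : prefers Pu x ζ := (hrev _ _).1 b1
    exact absurd b2 (not_lt.2 a2))
  exact ⟨T, c, d, hT⟩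

end ZTFacts

/-- The median of three vertices of a tree. -/
noncomputable def medT (T : SimpleGraph A) (x y z : A) : A :=
  if h : ∃ m, GBtw T x m y ∧ GBtw T x m z ∧ GBtw T y m z then h.choose else x

/-- The semi-hybrid conditions, in a form symmetric in the two thresholds. -/
structure SHc (D : Set (Pref A)) (T : SimpleGraph A) (a b : A) : Prop where
  tree : T.IsTree
  ne : a ≠ b
  tri : ∀ x, GBtw T x a b ∨ GBtw T x b a ∨ GBtw T a x b
  ssp : ∀ P ∈ D, GBtw T (peak P) a b → peak P ≠ a → SemiSP T a P
  best : ∀ P ∈ D, ¬ GBtw T (peak P) a b → ∀ y, GBtw T y a b → P.symm a ≤ P.symm y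
  ssp' : ∀ P ∈ D, GBtw T (peak P) b a → peak P ≠ b → SemiSP T b P
  best' : ∀ P ∈ D, ¬ GBtw T (peak P) b a → ∀ y, GBtw T y b a → P.symm b ≤ P.symm y

/-- The hybrid rule with dictator 1. -/
noncomputable def hyb (T : SimpleGraph A) (a b x y : A) : A :=
  if GBtw T x a b then medT T x y a else if GBtw T x b a then medT T x y b else x

section HybFacts
variable {D : Set (Pref A)} {T : SimpleGraph A} {a b : A}

theorem medT_spec (hT : T.IsTree) (x y z : A) :
    GBtw T x (medT T x y z) y ∧ GBtw T x (medT T x y z) z ∧ GBtw T y (medT T x y z) z := by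
  have h := tree_median hT x y z
  unfold medT
  rw [dif_pos h]
  exact h.choose_spec

theorem medT_unique (hT : T.IsTree) {x y z m m' : A}
    (h1 : GBtw T x m y) (h2 : GBtw T x m z) (h3 : GBtw T y m z)
    (h1' : GBtw T x m' y) (h2' : GBtw T x m' z) (h3' : GBtw T y m' z) : m = m' :=
  gbtw_anti hT.1 (med_gamma hT h2 h3 h1') (med_gamma hT h2' h3' h1)

theorem medT_comm (hT : T.IsTree) (x y z : A) : medT T x y z = medT T y x z := by
  obtain ⟨h1, h2, h3⟩ := medT_spec hT x y z
  obtain ⟨h1', h2', h3'⟩ := medT_spec hT y x z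
  exact medT_unique hT h1 h2 h3 (gbtw_symm h1') h3' h2'

theorem SHc.swap (S : SHc D T a b) : SHc D T b a :=
  ⟨S.tree, S.ne.symm, fun x => by
    rcases S.tri x with h | h | h
    · exact Or.inr (Or.inl h)
    · exact Or.inl h
    · exact Or.inr (Or.inr (gbtw_symm h)), S.ssp', S.best', S.ssp, S.best⟩

theorem SHc.disj (S : SHc D T a b) {x : A} (h1 : GBtw T x a b) (h2 : GBtw T x b a) : False :=
  S.ne (gbtw_anti S.tree.1 h1 h2)

theorem hyb_swap (S : SHc D T a b) (x y : A) : hyb T a b x y = hyb T b a x y := by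
  unfold hyb
  by_cases h1 : GBtw T x a b
  · have h2 : ¬ GBtw T x b a := fun h2 => S.disj h1 h2
    simp [h1, h2]
  · simp [h1]

theorem hyb_a {x : A} (hx : GBtw T x a b) (y : A) : hyb T a b x y = medT T x y a := by
  simp [hyb, hx]

theorem SHc.mem_a (S : SHc D T a b) {x m : A} (hx : GBtw T x a b) (hm : GBtw T x m a) :
    GBtw T m a b := by
  rcases gbtw_split hx m with h | h
  · rw [gbtw_anti S.tree.1 hm h]; exact gbtw_left _ _
  · exact h

theorem hyb_mem_a (S : SHc D T a b) {x : A} (hx : GBtw T x a b) (y : A) :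
    GBtw T (hyb T a b x y) a b := by
  rw [hyb_a hx]
  exact S.mem_a hx (medT_spec S.tree x y a).2.1

theorem SHc.cross (S : SHc D T a b) {x y : A} (hx : GBtw T x a b) (hy : ¬ GBtw T y a b) :
    GBtw T x a y := by
  rcases gbtw_split hx y with h | h
  · exact h
  · exact absurd h hy

theorem hyb_notmem_a (S : SHc D T a b) {x : A} (hx : ¬ GBtw T x a b) (y : A) :
    ¬ GBtw T (hyb T a b x y) a b := by
  by_cases h : GBtw T x b a
  · rw [hyb_swap S]
    intro h2
    exact S.disj h2 (hyb_mem_a S.swap h y)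
  · simpa [hyb, hx, h] using hx

theorem ssp_proj (hT : T.IsTree) {P : Pref A} (hS : SemiSP T a P) {c m : A}
    (h1 : GBtw T (peak P) m c) (h2 : GBtw T (peak P) m a) (h3 : GBtw T c m a) :
    P.symm m ≤ P.symm c := by
  by_cases hc : c ∈ intv T (peak P) a
  · rw [med_eq hT ((mem_intv_iff hT).1 hc) h1 h3]
  · have := hS.2 c hc
    rw [proj_intv hT h2 h1 (gbtw_symm h3)] at this
    exact le_of_lt this

theorem ssp_mono (hT : T.IsTree) {P : Pref A} (hS : SemiSP T a P) {c d : A}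
    (hc : GBtw T (peak P) c a) (hd : GBtw T (peak P) d a) (hcd : GBtw T (peak P) c d) :
    P.symm c ≤ P.symm d := by
  by_cases e : c = d
  · rw [e]
  · exact le_of_lt (hS.1 c d ((mem_intv_iff hT).2 hc) ((mem_intv_iff hT).2 hd) e
      ((mem_intv_iff hT).2 hcd))

theorem ssp_med (hT : T.IsTree) {P : Pref A} (hS : SemiSP T a P) (x' y : A) :
    P.symm (medT T (peak P) y a) ≤ P.symm (medT T x' y a) := by
  obtain ⟨h1, h2, h3⟩ := medT_spec hT (peak P) y a
  obtain ⟨-, -, h6⟩ := medT_spec hT x' y a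
  set m := medT T (peak P) y a
  set m' := medT T x' y a
  obtain ⟨k1, k2, k3⟩ := medT_spec hT (peak P) m' a
  set k := medT T (peak P) m' a
  refine le_trans ?_ (ssp_proj hT hS k1 k2 k3)
  rcases gbtw_split h2 k with h | h
  · exact ssp_mono hT hS h2 k2 h
  · have q1 : GBtw T y k a := gbtw_trans h6 k3
    have q2 := med_gamma hT k2 q1 h1
    rw [gbtw_anti hT.1 q2 (gbtw_symm h)]

theorem hyb_s1_a (S : SHc D T a b) {P : Pref A} (hP : P ∈ D) (hx : GBtw T (peak P) a b)
    (x' y : A) : P.symm (hyb T a b (peak P) y) ≤ P.symm (hyb T a b x' y) := by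
  by_cases hxa : peak P = a
  · have : hyb T a b (peak P) y = peak P := by
      rw [hyb_a hx]
      have := (medT_spec S.tree (peak P) y a).2.1
      rw [← hxa] at this ⊢
      exact gbtw_self this
    rw [this]
    exact peak_le P _
  have hS := S.ssp P hP hx hxa
  by_cases hx' : GBtw T x' a b
  · rw [hyb_a hx, hyb_a hx']
    exact ssp_med S.tree hS x' y
  · have h1 := S.cross hx (hyb_notmem_a S hx' y)
    have h2 := ssp_proj S.tree hS h1 (gbtw_right _ _) (gbtw_right _ _)
    have h3 := (medT_spec S.tree (peak P) y a).2.1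
    rw [hyb_a hx]
    exact le_trans (ssp_mono S.tree hS h3 (gbtw_right _ _) h3) h2

theorem hyb_s2_a (S : SHc D T a b) {P : Pref A} (hP : P ∈ D) {x : A} (hx : GBtw T x a b)
    (y' : A) : P.symm (hyb T a b x (peak P)) ≤ P.symm (hyb T a b x y') := by
  by_cases hy : GBtw T (peak P) a b
  · rw [hyb_a hx, hyb_a hx, medT_comm S.tree x (peak P), medT_comm S.tree x y']
    by_cases hya : peak P = a
    · have : medT T (peak P) x a = peak P := by
        have := (medT_spec S.tree (peak P) x a).2.1
        rw [← hya] at this ⊢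
        exact gbtw_self this
      rw [this]
      exact peak_le P _
    · exact ssp_med S.tree (S.ssp P hP hy hya) y' x
  · have h1 := hyb_mem_a S hx (peak P)
    have h2 := S.cross h1 hy
    have h3 : GBtw T (peak P) (hyb T a b x (peak P)) a := by
      rw [hyb_a hx]
      exact (medT_spec S.tree x (peak P) a).2.2
    rw [gbtw_anti S.tree.1 h3 (gbtw_symm h2)]
    exact S.best P hP hy _ (hyb_mem_a S hx y')

theorem hyb_mid {x : A} (h1 : ¬ GBtw T x a b) (h2 : ¬ GBtw T x b a) (y : A) :
    hyb T a b x y = x := by simp [hyb, h1, h2]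

theorem SHc.r2 (S : SHc D T a b) : R2 D (hyb T a b) := by
  have hs : ∀ x y, hyb T a b x y = hyb T b a x y := hyb_swap S
  refine ⟨?_, ?_, ?_⟩
  · intro x
    have : ∀ z, medT T x x z = x := fun z => gbtw_self (medT_spec S.tree x x z).1
    simp only [hyb, this]
    split_ifs <;> rfl
  · intro P hP x' y
    by_cases h1 : GBtw T (peak P) a b
    · exact hyb_s1_a S hP h1 x' y
    by_cases h2 : GBtw T (peak P) b a
    · rw [hs, hs]
      exact hyb_s1_a S.swap hP h2 x' y
    rw [hyb_mid h1 h2]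
    exact peak_le P _
  · intro P hP y' x
    by_cases h1 : GBtw T x a b
    · exact hyb_s2_a S hP h1 y'
    by_cases h2 : GBtw T x b a
    · rw [hs, hs]
      exact hyb_s2_a S.swap hP h2 y'
    rw [hyb_mid h1 h2, hyb_mid h1 h2]

theorem hyb_zone_a (S : SHc D T a b) {x : A} (hx : GBtw T x a b) (h : ∀ y, hyb T a b x y = x) :
    GBtw T a x b := by
  have h1 := h a
  rw [hyb_a hx] at h1
  have h2 := gbtw_self (medT_spec S.tree x a a).2.2
  rw [← h1, h2]
  exact gbtw_left _ _

theorem SHc.zone (S : SHc D T a b) : Z1 (hyb T a b) = intv T a b := by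
  have hs : ∀ x y, hyb T a b x y = hyb T b a x y := hyb_swap S
  have key : ∀ a b : A, SHc D T a b → ∀ x y, GBtw T a x b → GBtw T x a b → hyb T a b x y = x := by
    intro a b S x y h1 h2
    have e := gbtw_anti' S.tree.1 h1 h2
    rw [hyb_a h2]
    have := (medT_spec S.tree x y a).2.1
    rw [e] at this ⊢
    exact gbtw_self this
  ext x
  rw [mem_intv_iff S.tree]
  constructor
  · intro h
    rcases S.tri x with h1 | h1 | h1
    · exact hyb_zone_a S h1 h
    · exact gbtw_symm (hyb_zone_a S.swap h1 (fun y => (hs x y).symm.trans (h y)))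
    · exact h1
  · intro h y
    by_cases h1 : GBtw T x a b
    · exact key a b S x y h h1
    by_cases h2 : GBtw T x b a
    · rw [hs]
      exact key b a S.swap x y (gbtw_symm h) h2
    exact hyb_mid h1 h2 y

theorem SHc.of_dom (hT : T.IsTree) (hd : DualThresholds T a b)
    (hD : D ⊆ {P | SemiHybridPref T a b P}) : SHc D T a b := by
  have tri : ∀ x, GBtw T x a b ∨ GBtw T x b a ∨ GBtw T a x b := by
    intro x
    by_cases hx : x ∈ intv T a b
    · exact Or.inr (Or.inr ((mem_intv_iff hT).1 hx))
    · obtain ⟨m, h1, h2, h3⟩ := tree_median hT a b x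
      have h4 := hd.2 x hx
      rw [proj_intv hT h1 h2 h3] at h4
      rcases h4 with h4 | h4
      · left; rw [h4] at h3; exact gbtw_symm h3
      · right; left; rw [h4] at h2; exact gbtw_symm h2
  refine ⟨hT, hd.1, tri, ?_, ?_, ?_, ?_⟩
  · intro P hP h1 h2
    exact ((hD hP).1 ⟨(mem_side_iff hT).2 h1, h2⟩).1
  · intro P hP h1 y hy
    have hb : IsBestOf P a (sideSet T a b) := by
      rcases tri (peak P) with h | h | h
      · exact absurd h h1
      · by_cases e : peak P = b
        · refine ((hD hP).2.2 ((mem_intv_iff hT).2 ?_)).1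
          rw [e]; exact gbtw_right _ _
        · exact ((hD hP).2.1 ⟨(mem_side_iff hT).2 h, e⟩).2
      · exact ((hD hP).2.2 ((mem_intv_iff hT).2 h)).1
    by_cases e : y = a
    · rw [e]
    · exact le_of_lt (hb.2 y ((mem_side_iff hT).2 hy) e)
  · intro P hP h1 h2
    exact ((hD hP).2.1 ⟨(mem_side_iff hT).2 h1, h2⟩).1
  · intro P hP h1 y hy
    have hb : IsBestOf P b (sideSet T b a) := by
      rcases tri (peak P) with h | h | h
      · by_cases e : peak P = a
        · refine ((hD hP).2.2 ((mem_intv_iff hT).2 ?_)).2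
          rw [e]; exact gbtw_left _ _
        · exact ((hD hP).1 ⟨(mem_side_iff hT).2 h, e⟩).2
      · exact absurd h h1
      · exact ((hD hP).2.2 ((mem_intv_iff hT).2 h)).2
    by_cases e : y = b
    · rw [e]
    · exact le_of_lt (hb.2 y ((mem_side_iff hT).2 hy) e)

end HybFacts

section Bridge
variable {D : Set (Pref A)}

theorem ctx_of (hcard : 3 ≤ Fintype.card A) (hconn : (adjGraph D).Connected) : Ctx D := by
  refine ⟨hcard, hconn, fun x => ?_⟩
  obtain ⟨y, hy⟩ : ∃ y : A, y ≠ x := Fintype.exists_ne_of_one_lt_card (by omega) x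
  obtain ⟨p⟩ := hconn.preconnected x y
  cases p with
  | nil => exact absurd rfl hy
  | cons h p =>
    rw [adjGraph, SimpleGraph.fromRel_adj] at h
    rcases h.2 with ⟨P, hP, P', hP', h1, h2, h3, h4, -⟩ | ⟨P, hP, P', hP', h1, h2, h3, h4, -⟩
    · exact ⟨P, hP, h1⟩
    · exact ⟨P', hP', h3⟩

theorem weak_of_sp {P : Pref A} {x y : A} (h : x = y ∨ prefers P x y) : P.symm x ≤ P.symm y := by
  rcases h with h | h
  · rw [h]
  · exact le_of_lt h

theorem sp_of_weak {P : Pref A} {x y : A} (h : P.symm x ≤ P.symm y) : x = y ∨ prefers P x y := by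
  by_cases e : x = y
  · exact Or.inl e
  · exact Or.inr (pref_of_le h e)

theorem noInv_of {Pl Pu : Pref A}
    (hnoinv : ¬ ∃ g : (Fin 2 → Pref A) → A,
        IsRule D g ∧ TopsOnly D g ∧ StrategyProof D g ∧ g ![Pl, Pu] = g ![Pu, Pl]) :
    NoInv D Pl Pu := by
  intro g hg he
  apply hnoinv
  refine ⟨fun P => g (peak (P 0)) (peak (P 1)), ?_, ?_, ?_, ?_⟩
  · intro P hP a ha
    simp only [ha]
    exact hg.un a
  · intro P P' _ _ h
    simp only [h]
  · intro P hP i Q hQ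
    apply sp_of_weak
    fin_cases i
    · simpa using hg.s1 (P 0) (hP 0) (peak Q) (peak (P 1))
    · simpa using hg.s2 (P 1) (hP 1) (peak Q) (peak (P 0))
  · simpa using he

theorem inDom_pair {P Q : Pref A} (hP : P ∈ D) (hQ : Q ∈ D) : InDom D ![P, Q] := by
  intro i
  fin_cases i
  · exact hP
  · exact hQ

theorem exists_R2 (C : Ctx D) {f : (Fin 2 → Pref A) → A} (hrule : IsRule D f)
    (hto : TopsOnly D f) (hsp : StrategyProof D f) :
    ∃ g, R2 D g ∧ ∀ P, InDom D P → f P = g (peak (P 0)) (peak (P 1)) := by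
  choose Q hQ hQp using C.rich
  have hF : ∀ P, InDom D P → f P = f ![Q (peak (P 0)), Q (peak (P 1))] := by
    intro P hP
    apply hto _ _ hP (inDom_pair (hQ _) (hQ _))
    intro i
    fin_cases i
    · exact (hQp _).symm
    · exact (hQp _).symm
  refine ⟨fun x y => f ![Q x, Q y], ⟨?_, ?_, ?_⟩, hF⟩
  · intro x
    apply hrule _ (inDom_pair (hQ _) (hQ _))
    intro i
    fin_cases i
    · exact hQp x
    · exact hQp x
  · intro P hP x y
    have h1 := hF _ (inDom_pair hP (hQ y))
    have h2 := hsp _ (inDom_pair hP (hQ y)) 0 (Q x) (hQ x)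
    rw [h1] at h2
    have e : Function.update ![P, Q y] 0 (Q x) = ![Q x, Q y] := by
      ext i
      fin_cases i <;> simp
    rw [e] at h2
    simp only [Matrix.cons_val_zero, Matrix.cons_val_one, hQp] at h2
    exact weak_of_sp h2
  · intro P hP x y
    have h1 := hF _ (inDom_pair (hQ y) hP)
    have h2 := hsp _ (inDom_pair (hQ y) hP) 1 (Q x) (hQ x)
    rw [h1] at h2
    have e : Function.update ![Q y, P] 1 (Q x) = ![Q y, Q x] := by
      ext i
      fin_cases i <;> simp
    rw [e] at h2
    simp only [Matrix.cons_val_zero, Matrix.cons_val_one, hQp] at h2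
    exact weak_of_sp h2

theorem final_core (C : Ctx D) {Pl Pu : Pref A} (hPl : Pl ∈ D) (hPu : Pu ∈ D)
    (hrev : Reversed Pl Pu) (hN : NoInv D Pl Pu) {T : SimpleGraph A} {a b : A}
    (hsh : SemiHybridDomainOn D T a b) {f : (Fin 2 → Pref A) → A} {g : A → A → A}
    (hg : R2 D g) (hne : (Z1 g).Nonempty) {i j : Fin 2} (hij : (i = 0 ∧ j = 1) ∨ (i = 1 ∧ j = 0))
    (hf : ∀ P, InDom D P → f P = g (peak (P i)) (peak (P j))) :
    (∃ (T' : SimpleGraph A) (a' b' : A),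
      IsHybridRule D f T' a' b' ∧ intv T a b ⊆ intv T' a' b') ∧
    DictatorOn D f (intv T a b) := by
  obtain ⟨hT, hd, hD, -, hmin, -⟩ := hsh
  have S := SHc.of_dom hT hd hD
  have hsub : intv T a b ⊆ Z1 g := by
    by_contra hc
    rw [← S.zone] at hc
    obtain ⟨k, hk, hkne, hlt⟩ := zone_shrink C hPl hPu hrev hN hg S.r2 hne hc
    rw [S.zone] at hlt
    obtain ⟨T', a', b', Z⟩ := hk.exists_tree C hPl hPu hrev hN hkne
    exact hmin ⟨T', a', b', Z.tree, Z.dual C hk, fun P hP => Z.semiHybrid C hk hP,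
      by rw [Z.intv_eq]; exact hlt⟩
  obtain ⟨T', a', b', Z⟩ := hg.exists_tree C hPl hPu hrev hN hne
  have hcard : 3 ≤ (Z1 g).ncard := by
    by_contra hc
    have hsub2 : ({a', b'} : Set A) ⊆ Z1 g := by
      intro x hx
      rcases hx with rfl | rfl
      · exact Z.amem
      · exact Z.swap.amem
    have h2 := Set.ncard_pair Z.ne
    have h3 : ({a', b'} : Set A) = Z1 g := Set.eq_of_subset_of_ncard_le hsub2 (by omega)
    exact mixC C hPl hPu hrev hN hg Z.ne h3.symm
  have key : ∀ v w, ZT D g T' v w → ∀ P : Fin 2 → Pref A, InDom D P →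
      peak (P i) ∈ sideSet T' v w → f P = projOn T' (gammaSet T' P) v := by
    intro v w Z P hP hx
    rw [Z.side C hg] at hx
    obtain ⟨h1, h2, h3⟩ := Z.med C hg (peak (P j)) hx
    rw [hf P hP]
    rcases hij with ⟨rfl, rfl⟩ | ⟨rfl, rfl⟩
    · exact (proj_gamma Z.tree h1 h2 h3).symm
    · exact (proj_gamma Z.tree (gbtw_symm h1) h3 h2).symm
  refine ⟨⟨T', a', b', ⟨Z.tree, Z.dual C hg, by rw [Z.intv_eq]; exact hcard, i, ?_⟩,
    by rw [Z.intv_eq]; exact hsub⟩, i, ?_⟩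
  · intro P hP
    refine ⟨?_, fun h => key a' b' Z P hP h.1, fun h => key b' a' Z.swap P hP h.1⟩
    intro h
    rw [Z.intv_eq] at h
    rw [hf P hP]
    exact h _
  · intro P hP h
    rw [hf P hP]
    exact hsub (h i) _

end Bridge

/-- on a non-dictatorial, unidimensional, `(a,b)`-semi-hybrid domain
admitting no invariant, tops-only and strategy-proof two-voter rule, every
tops-only and strategy-proof two-voter rule is a hybrid rule whose free zone
contains `⟨a, b|T⟩`; in particular it behaves like a dictatorship on `⟨a, b|T⟩`. -/
theorem stmt4_hybrid_rule_characterization (D : Set (Pref A)) (hD : D.Nonempty)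
    (hcard : 3 ≤ Fintype.card A) (huni : Unidimensional D)
    (hnd : ¬ DictatorialDomain D)
    (Pl Pu : Pref A) (hPl : Pl ∈ D) (hPu : Pu ∈ D) (hrev : Reversed Pl Pu)
    (hnoinv : ¬ ∃ g : (Fin 2 → Pref A) → A,
        IsRule D g ∧ TopsOnly D g ∧ StrategyProof D g ∧ g ![Pl, Pu] = g ![Pu, Pl])
    (T : SimpleGraph A) (a b : A) (hsh : SemiHybridDomainOn D T a b)
    (f : (Fin 2 → Pref A) → A) (hrule : IsRule D f) (hto : TopsOnly D f)
    (hsp : StrategyProof D f) :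
    (∃ (T' : SimpleGraph A) (a' b' : A),
      IsHybridRule D f T' a' b' ∧ intv T a b ⊆ intv T' a' b') ∧
    DictatorOn D f (intv T a b) := by
  have C : Ctx D := ctx_of hcard huni.1
  have hN : NoInv D Pl Pu := noInv_of hnoinv
  obtain ⟨g, hg, hf⟩ := exists_R2 C hrule hto hsp
  rcases hg.zone_pair C hPl hPu hrev hN with h | h
  · exact final_core C hPl hPu hrev hN hsh hg ⟨_, h.1⟩ (Or.inl ⟨rfl, rfl⟩) hf
  · exact final_core C hPl hPu hrev hN hsh hg.swap ⟨_, h.1⟩ (Or.inr ⟨rfl, rfl⟩) hf
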